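/- arXiv:1312.3679 — 2 statements merged into one kernel-verified Lean document; each statement's English description precedes it below -/
import Mathlib

section
/- For every n ≥ 1 and every weakly semisimple x-monotone drawing D of the complete graph K_n, the number of unordered pairs of edges of D that cross an odd number of times is at least Z(n). (In particular, the monotone weakly semisimple odd crossing number of K_n is at least Z(n).) -/
/-- `Zval n` is Hill's conjectured value
`Z(n) = (1/4)⌊n/2⌋⌊(n−1)/2⌋⌊(n−2)/2⌋⌊(n−3)/2⌋` for the crossing number of `K n`.
(The product of the four floors is always divisible by 4, so natural division is exact.) -/
def Zval (n : ℕ) : ℕ :=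
  n / 2 * ((n - 1) / 2) * ((n - 2) / 2) * ((n - 3) / 2) / 4

/-- An x-monotone drawing of the complete graph `K n`: vertices `v i = (x i, 0)` with
`x` strictly increasing, and for each pair `i < j` a continuous function `e i j` on
`[x i, x j]` vanishing at the endpoints, whose graph is the arc of the edge `{i, j}`.
Edges avoid the intermediate vertices, any two distinct edges meet in finitely many
interior parameters, and at each such common point the difference changes sign
(a proper crossing). -/
structure XMonotoneDrawing (n : ℕ) where
  x : Fin n → ℝ
  x_strictMono : StrictMono x
  e : Fin n → Fin n → ℝ → ℝ
  cont : ∀ i j : Fin n, i < j → ContinuousOn (e i j) (Set.Icc (x i) (x j))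
  end_left : ∀ i j : Fin n, i < j → e i j (x i) = 0
  end_right : ∀ i j : Fin n, i < j → e i j (x j) = 0
  avoid_vertex : ∀ i m j : Fin n, i < m → m < j → e i j (x m) ≠ 0
  cross_finite : ∀ i j k l : Fin n, i < j → k < l → (i, j) ≠ (k, l) →
    {t : ℝ | max (x i) (x k) < t ∧ t < min (x j) (x l) ∧ e i j t = e k l t}.Finite
  sign_change : ∀ i j k l : Fin n, i < j → k < l → (i, j) ≠ (k, l) →
    ∀ t : ℝ, max (x i) (x k) < t → t < min (x j) (x l) → e i j t = e k l t →
      ∃ ε > (0 : ℝ), ∀ s : ℝ, max (x i) (x k) < s → t - ε < s → s < t →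
        ∀ u : ℝ, u < min (x j) (x l) → t < u → u < t + ε →
          (e i j s - e k l s) * (e i j u - e k l u) < 0

namespace XMonotoneDrawing

variable {n : ℕ}

/-- The set of parameters at which the edges `{i,j}` and `{k,l}` cross
(both edges are parametrized over the `x`-axis). -/
def crossSet (D : XMonotoneDrawing n) (i j k l : Fin n) : Set ℝ :=
  {t : ℝ | max (D.x i) (D.x k) < t ∧ t < min (D.x j) (D.x l) ∧ D.e i j t = D.e k l t}

/-- The number of crossings between the edges `{i,j}` and `{k,l}`. -/
noncomputable def crossCount (D : XMonotoneDrawing n) (i j k l : Fin n) : ℕ :=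
  (D.crossSet i j k l).ncard

/-- Two edges `{i,j}` and `{k,l}` are adjacent if they share an endpoint index. -/
def Adj (i j k l : Fin n) : Prop := i = k ∨ i = l ∨ j = k ∨ j = l

/-- A drawing is semisimple if no two adjacent edges cross. -/
def Semisimple (D : XMonotoneDrawing n) : Prop :=
  ∀ i j k l : Fin n, i < j → k < l → (i, j) ≠ (k, l) → Adj i j k l →
    D.crossCount i j k l = 0

/-- A drawing is weakly semisimple if every two adjacent edges cross an even
number of times. -/
def WeaklySemisimple (D : XMonotoneDrawing n) : Prop :=
  ∀ i j k l : Fin n, i < j → k < l → (i, j) ≠ (k, l) → Adj i j k l →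
    Even (D.crossCount i j k l)

/-- A drawing is simple if no two adjacent edges cross and every two non-adjacent
edges cross at most once. -/
def Simple (D : XMonotoneDrawing n) : Prop :=
  ∀ i j k l : Fin n, i < j → k < l → (i, j) ≠ (k, l) →
    (Adj i j k l → D.crossCount i j k l = 0) ∧
    (¬ Adj i j k l → D.crossCount i j k l ≤ 1)

/-- `cr D`: the total number of crossings of `D`. (Each unordered pair of distinct
edges is counted twice in the sum, whence the division by 2; `crossCount` is
symmetric in the two edges.) -/
noncomputable def cr (D : XMonotoneDrawing n) : ℕ :=
  (∑ p : (Fin n × Fin n) × (Fin n × Fin n),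
      if p.1.1 < p.1.2 ∧ p.2.1 < p.2.2 ∧ p.1 ≠ p.2 then
        D.crossCount p.1.1 p.1.2 p.2.1 p.2.2
      else 0) / 2

/-- `ocr D`: the number of unordered pairs of edges of `D` crossing an odd number
of times. (Each unordered pair appears twice as an ordered pair.) -/
noncomputable def ocr (D : XMonotoneDrawing n) : ℕ :=
  {p : (Fin n × Fin n) × (Fin n × Fin n) |
    p.1.1 < p.1.2 ∧ p.2.1 < p.2.2 ∧ p.1 ≠ p.2 ∧
      Odd (D.crossCount p.1.1 p.1.2 p.2.1 p.2.2)}.ncard / 2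

/-- The signature of the triple `i < j < k`: `true` (i.e. `+`) if the vertex `v j`
lies below the edge `{i, k}`, i.e. `e i k (x j) > 0`, and `false` (i.e. `−`) otherwise. -/
noncomputable def sig (D : XMonotoneDrawing n) (i j k : Fin n) : Bool :=
  if 0 < D.e i k (D.x j) then true else false

/-- `D` realizes the signature function `σ` if `σ_D` and `σ` agree on all
increasing triples. -/
def Realizes (D : XMonotoneDrawing n) (σ : Fin n → Fin n → Fin n → Bool) : Prop :=
  ∀ i j k : Fin n, i < j → j < k → D.sig i j k = σ i j k

/-- A drawing is pseudolinear if its edges extend to continuous curves over all of `ℝ`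
that avoid all vertices other than their endpoints and such that any two of these
extended curves cross exactly once (the crossing being a sign change of the difference). -/
def Pseudolinear (D : XMonotoneDrawing n) : Prop :=
  ∃ p : Fin n → Fin n → ℝ → ℝ,
    (∀ i j : Fin n, i < j → Continuous (p i j)) ∧
    (∀ i j : Fin n, i < j → ∀ t ∈ Set.Icc (D.x i) (D.x j), p i j t = D.e i j t) ∧
    (∀ i j m : Fin n, i < j → m ≠ i → m ≠ j → p i j (D.x m) ≠ 0) ∧
    (∀ i j k l : Fin n, i < j → k < l → (i, j) ≠ (k, l) →
      ∃ t : ℝ, p i j t = p k l t ∧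
        ∀ s u : ℝ, s < t → t < u →
          (p i j s - p k l s) * (p i j u - p k l u) < 0)

/-- The arc of the edge `{i, j}` as a subset of the plane `ℝ × ℝ`. -/
def edgeArc (D : XMonotoneDrawing n) (i j : Fin n) : Set (ℝ × ℝ) :=
  {q : ℝ × ℝ | D.x i ≤ q.1 ∧ q.1 ≤ D.x j ∧ q.2 = D.e i j q.1}

/-- The union of all edge arcs of the drawing. -/
def arcUnion (D : XMonotoneDrawing n) : Set (ℝ × ℝ) :=
  ⋃ i : Fin n, ⋃ j : Fin n, ⋃ (_ : i < j), D.edgeArc i j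

end XMonotoneDrawing

namespace Sig

variable {n : ℕ}

/-- With respect to a signature function `σ`, the vertex `m ∉ {i, j}` is on the left of
the directed edge `(i, j)` (where `i < j`). -/
def LeftOf (σ : Fin n → Fin n → Fin n → Bool) (i j m : Fin n) : Prop :=
  (i < m ∧ m < j ∧ σ i m j = false) ∨ (m < i ∧ σ m i j = true) ∨ (j < m ∧ σ i j m = true)

/-- The number of vertices on the left of the directed edge `(i, j)`. -/
noncomputable def leftCount (σ : Fin n → Fin n → Fin n → Bool) (i j : Fin n) : ℕ :=
  {m : Fin n | LeftOf σ i j m}.ncard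

/-- The edge `{i, j}` (with `i < j`) is a `k`-edge of `σ` if `min(ℓ, n − 2 − ℓ) = k`,
where `ℓ` is the number of vertices on its left. -/
def IsKEdge (σ : Fin n → Fin n → Fin n → Bool) (k : ℕ) (i j : Fin n) : Prop :=
  min (leftCount σ i j) (n - 2 - leftCount σ i j) = k

/-- `Ek σ k`: the number of `k`-edges of `σ`. -/
noncomputable def Ek (σ : Fin n → Fin n → Fin n → Bool) (k : ℕ) : ℕ :=
  {p : Fin n × Fin n | p.1 < p.2 ∧ IsKEdge σ k p.1 p.2}.ncard

/-- `Ele σ k = E_{≤k}(σ)`: the number of `≤k`-edges of `σ`. -/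
noncomputable def Ele (σ : Fin n → Fin n → Fin n → Bool) (k : ℕ) : ℕ :=
  ∑ i ∈ Finset.range (k + 1), Ek σ i

/-- `Elele σ k = E_{≤≤k}(σ) = Σ_{j=0}^{k} E_{≤j}(σ)`. -/
noncomputable def Elele (σ : Fin n → Fin n → Fin n → Bool) (k : ℕ) : ℕ :=
  ∑ j ∈ Finset.range (k + 1), Ele σ j

/-- `E_{≤≤k}` with an integer index, which vanishes for negative `k`. -/
noncomputable def ElelZ (σ : Fin n → Fin n → Fin n → Bool) (k : ℤ) : ℕ :=
  if 0 ≤ k then Elele σ k.toNat else 0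

/-- The left count of the edge `{i, j}` in the drawing restricted to the first
`n − 1` vertices (the last vertex deleted). -/
noncomputable def leftCountRes (σ : Fin n → Fin n → Fin n → Bool) (i j : Fin n) : ℕ :=
  {m : Fin n | LeftOf σ i j m ∧ (m : ℕ) + 1 < n}.ncard

/-- The edge `{i, j}` is a `k`-edge of the restriction of `σ` to the first `n − 1`
vertices (there `min(ℓ', (n−1) − 2 − ℓ') = k`). -/
def IsKEdgeRes (σ : Fin n → Fin n → Fin n → Bool) (k : ℕ) (i j : Fin n) : Prop :=
  min (leftCountRes σ i j) (n - 3 - leftCountRes σ i j) = k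

/-- The edge `{i, j}` is a `(D,D')`-invariant `≤k`-edge: it avoids the last vertex and
is an `m`-edge with `m ≤ k` both in `σ` and in the restriction of `σ` to the first
`n − 1` vertices. -/
def InvariantLeK (σ : Fin n → Fin n → Fin n → Bool) (k : ℕ) (i j : Fin n) : Prop :=
  (j : ℕ) + 1 < n ∧ (∃ m ≤ k, IsKEdge σ m i j) ∧ (∃ m ≤ k, IsKEdgeRes σ m i j)

/-- The ten 4-tuple forms allowed in signature functions of semisimple x-monotone
drawings: `++++, −−−−, ++−−, −−++, −++−, +−−+, −−−+, +++−, +−−−, −+++`. -/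
def AllowedForm (a b c d : Bool) : Prop :=
  (a, b, c, d) ∈ ([(true, true, true, true), (false, false, false, false),
    (true, true, false, false), (false, false, true, true),
    (false, true, true, false), (true, false, false, true),
    (false, false, false, true), (true, true, true, false),
    (true, false, false, false), (false, true, true, true)] :
      List (Bool × Bool × Bool × Bool))

/-- A signature function is admissible if every increasing 4-tuple is of one of the
ten allowed forms. -/
def Admissible (σ : Fin n → Fin n → Fin n → Bool) : Prop :=
  ∀ a b c d : Fin n, a < b → b < c → c < d →
    AllowedForm (σ a b c) (σ a b d) (σ a c d) (σ b c d)

/-- The six convex forms: `++++, −−−−, ++−−, −−++, −++−, +−−+`. -/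
def ConvexForm (a b c d : Bool) : Prop :=
  (a, b, c, d) ∈ ([(true, true, true, true), (false, false, false, false),
    (true, true, false, false), (false, false, true, true),
    (false, true, true, false), (true, false, false, true)] :
      List (Bool × Bool × Bool × Bool))

/-- The 4-tuple `a < b < c < d` is convex in `σ`. -/
def Convex4 (σ : Fin n → Fin n → Fin n → Bool) (a b c d : Fin n) : Prop :=
  ConvexForm (σ a b c) (σ a b d) (σ a c d) (σ b c d)

/-- The eight 4-tuple forms of pseudolinear x-monotone drawings (the sign-monotone
sequences): `++++, +++−, ++−−, +−−−, −−−−, −−−+, −−++, −+++`. -/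
def PLForm (a b c d : Bool) : Prop :=
  (a, b, c, d) ∈ ([(true, true, true, true), (true, true, true, false),
    (true, true, false, false), (true, false, false, false),
    (false, false, false, false), (false, false, false, true),
    (false, false, true, true), (false, true, true, true)] :
      List (Bool × Bool × Bool × Bool))

/-- The relation `j ⋖ k` on `{j : i < j}`: `j ⋖ k` iff (`j < k` and `σ i j k = +`)
or (`k < j` and `σ i k j = −`). -/
def Below (σ : Fin n → Fin n → Fin n → Bool) (i j k : Fin n) : Prop :=
  (j < k ∧ σ i j k = true) ∨ (k < j ∧ σ i k j = false)

end Sig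

open Finset

/-- Ranks with respect to a strict total order on a finite set enumerate an initial segment. -/
theorem sum_comp_rank {α M : Type*} [AddCommMonoid M] (S : Finset α) (r : α → α → Prop)
    [DecidableRel r]
    (irrefl : ∀ a ∈ S, ¬ r a a)
    (trans : ∀ a ∈ S, ∀ b ∈ S, ∀ c ∈ S, r a b → r b c → r a c)
    (total : ∀ a ∈ S, ∀ b ∈ S, a ≠ b → r a b ∨ r b a) (g : ℕ → M) :
    ∑ i ∈ S, g #{m ∈ S | r m i} = ∑ t ∈ range #S, g t := by
  have lt : ∀ a ∈ S, ∀ b ∈ S, r a b → #{m ∈ S | r m a} < #{m ∈ S | r m b} := by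
    intro a ha b hb h
    refine card_lt_card ⟨fun m hm => ?_, fun hsub => ?_⟩
    · simp only [mem_filter] at hm ⊢
      exact ⟨hm.1, trans m hm.1 a ha b hb hm.2 h⟩
    · exact irrefl a ha (mem_filter.1 (hsub (mem_filter.2 ⟨ha, h⟩))).2
  have inj : Set.InjOn (fun i => #{m ∈ S | r m i}) S := by
    intro a ha b hb h
    by_contra hne
    have h' : #{m ∈ S | r m a} = #{m ∈ S | r m b} := h
    rcases total a ha b hb hne with hr | hr
    · exact (lt a ha b hb hr).ne h'
    · exact (lt b hb a ha hr).ne h'.symm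
  have himg : S.image (fun i => #{m ∈ S | r m i}) = range #S := by
    refine eq_of_subset_of_card_le (fun t ht => ?_) ?_
    · obtain ⟨i, hi, rfl⟩ := mem_image.1 ht
      exact mem_range.2 (card_lt_card ⟨filter_subset _ _,
        fun hsub => irrefl i hi (mem_filter.1 (hsub hi)).2⟩)
    · rw [card_image_of_injOn inj, card_range]
  rw [← himg, sum_image inj]

/-- If at least `t` elements precede `z`, then exactly `t` elements have rank below `t`,
and all of them precede `z`. -/
theorem le_card_rank_lt {α : Type*} (S : Finset α) (r : α → α → Prop) [DecidableRel r]
    (irrefl : ∀ a ∈ S, ¬ r a a)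
    (trans : ∀ a ∈ S, ∀ b ∈ S, ∀ c ∈ S, r a b → r b c → r a c)
    (total : ∀ a ∈ S, ∀ b ∈ S, a ≠ b → r a b ∨ r b a)
    {z : α} (hz : z ∈ S) {t : ℕ} (ht : t ≤ #{m ∈ S | r m z}) :
    t ≤ #{j ∈ S | r j z ∧ #{m ∈ S | r m j} < t} := by
  have h := sum_comp_rank S r irrefl trans total (fun q => if q < t then 1 else 0)
  have hle : t ≤ #S := ht.trans (card_filter_le _ _)
  have hr : {q ∈ range #S | q < t} = range t := by
    ext q; simp only [mem_filter, mem_range]; omega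
  rw [← card_filter, ← card_filter, hr, card_range] at h
  conv_lhs => rw [← h]
  refine card_le_card fun j hj => ?_
  obtain ⟨hjS, hj⟩ := mem_filter.1 hj
  refine mem_filter.2 ⟨hjS, ?_, hj⟩
  rcases eq_or_ne j z with rfl | hne
  · omega
  · rcases total j hjS z hz hne with hr | hr
    · exact hr
    · have : #{m ∈ S | r m z} ≤ #{m ∈ S | r m j} := card_le_card fun m hm => by
        obtain ⟨hm, hmz⟩ := mem_filter.1 hm
        exact mem_filter.2 ⟨hm, trans m hm z hz j hjS hmz hr⟩
      omega

section OrderedSums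

variable {M : Type*} [AddCommMonoid M]

theorem sum_range_offDiag (n : ℕ) (H : ℕ → ℕ → M) (hH : ∀ i, H i i = 0) :
    ∑ i ∈ range n, ∑ k ∈ range n, H i k =
      ∑ b ∈ range n, ∑ a ∈ range b, (H a b + H b a) := by
  induction n with
  | zero => simp
  | succ n ih =>
    simp only [sum_range_succ, sum_add_distrib, hH, add_zero] at ih ⊢
    rw [ih]; abel

theorem sum_range_vertex_edge (n : ℕ) (G : ℕ → ℕ → ℕ → M)
    (hG : ∀ i k l, i = k ∨ i = l → G i k l = 0) :
    ∑ i ∈ range n, ∑ l ∈ range n, ∑ k ∈ range l, G i k l =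
      ∑ c ∈ range n, ∑ b ∈ range c, ∑ a ∈ range b, (G a b c + G b a c + G c a b) := by
  induction n with
  | zero => simp
  | succ n ih =>
    have h := sum_range_offDiag n (fun i k => G i k n) (fun i => hG _ _ _ (Or.inl rfl))
    have h0 : ∀ k, G n k n = 0 := fun k => hG _ _ _ (Or.inr rfl)
    simp only [sum_range_succ, sum_add_distrib, h0, sum_const_zero, add_zero] at ih h ⊢
    rw [ih, h]; abel

/-- A sum over ordered pairs of disjoint edges, regrouped by the four endpoints. -/
theorem sum_range_edge_edge (n : ℕ) (F : ℕ → ℕ → ℕ → ℕ → M)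
    (hF : ∀ i j k l, i = k ∨ i = l ∨ j = k ∨ j = l → F i j k l = 0) :
    ∑ j ∈ range n, ∑ i ∈ range j, ∑ l ∈ range n, ∑ k ∈ range l, F i j k l =
      ∑ d ∈ range n, ∑ c ∈ range d, ∑ b ∈ range c, ∑ a ∈ range b,
        (F a d b c + F b d a c + F c d a b + (F b c a d + F a c b d + F a b c d)) := by
  induction n with
  | zero => simp
  | succ n ih =>
    have h1 := sum_range_vertex_edge n (fun i k l => F i n k l)
      (fun i k l h => hF _ _ _ _ (by tauto))
    have h2 := sum_range_vertex_edge n (fun k i j => F i j k n)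
      (fun k i j h => hF _ _ _ _ (by tauto))
    have h0 : ∀ i k, F i n k n = 0 := fun i k => hF _ _ _ _ (by tauto)
    have h3 : ∑ j ∈ range n, ∑ i ∈ range j, ∑ k ∈ range n, F i j k n =
        ∑ k ∈ range n, ∑ j ∈ range n, ∑ i ∈ range j, F i j k n := by
      rw [sum_comm (s := range n) (t := range n)]
      exact sum_congr rfl fun j _ => sum_comm
    simp only [sum_range_succ, sum_add_distrib, h0, sum_const_zero, add_zero] at ih h1 h2 h3 ⊢
    rw [ih, h3, h1, h2]
    abel

end OrderedSums

theorem sum_range_choose_right (n k : ℕ) : ∑ i ∈ range n, i.choose k = n.choose (k + 1) := by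
  induction n with
  | zero => simp
  | succ n ih => rw [sum_range_succ, ih, Nat.choose_succ_succ, add_comm]

theorem sum_range_const_sub (K n : ℕ) (h : K ≤ n) : ∑ t ∈ range n, (K - t) = (K + 1).choose 2 := by
  induction K generalizing n with
  | zero => simp
  | succ K ih =>
    obtain ⟨n, rfl⟩ := Nat.exists_eq_add_of_le' (show 1 ≤ n by omega)
    rw [sum_range_succ', show (K + 1 + 1).choose 2 = (K + 1) + (K + 1).choose 2 by
      rw [Nat.choose_succ_succ, Nat.choose_one_right]]
    simp only [Nat.add_sub_add_right]
    rw [ih n (by omega)]; omega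

/-! ### Triple signs -/

/-- The conditions on triple signs expressing that the edges leaving a vertex to the right,
and those leaving it to the left, are linearly ordered. -/
structure TripleSignOrdered (s : ℕ → ℕ → ℕ → Bool) (n : ℕ) : Prop where
  right : ∀ a b c d, a < b → b < c → c < d → d < n → s a b c = s a c d → s a b d = s a b c
  left : ∀ a b c d, a < b → b < c → c < d → d < n → s a b d = s b c d → s a c d = s a b d

/-- The vertex `m` lies on the left of the edge from `i` to `j`. -/
def IsLeft (s : ℕ → ℕ → ℕ → Bool) (i j m : ℕ) : Prop :=
  (m < i ∧ s m i j = true) ∨ (i < m ∧ m < j ∧ s i m j = false) ∨ (j < m ∧ s i j m = true)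

instance (s : ℕ → ℕ → ℕ → Bool) (i j m : ℕ) : Decidable (IsLeft s i j m) := by
  unfold IsLeft; infer_instance

/-- The triple signs of the drawing reflected in the horizontal axis. -/
def flipSign (s : ℕ → ℕ → ℕ → Bool) (i j k : ℕ) : Bool := !s i j k

/-- The number of vertices below `n` on the left of the edge from `i` to `j`. -/
def numLeft (s : ℕ → ℕ → ℕ → Bool) (n i j : ℕ) : ℕ := #{m ∈ range n | IsLeft s i j m}

theorem TripleSignOrdered.flip {s : ℕ → ℕ → ℕ → Bool} {n : ℕ} (h : TripleSignOrdered s n) :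
    TripleSignOrdered (flipSign s) n where
  right a b c d h1 h2 h3 h4 := by
    have := h.right a b c d h1 h2 h3 h4
    simpa [flipSign] using this
  left a b c d h1 h2 h3 h4 := by
    have := h.left a b c d h1 h2 h3 h4
    simpa [flipSign] using this

theorem TripleSignOrdered.mono {s : ℕ → ℕ → ℕ → Bool} {n m : ℕ} (h : TripleSignOrdered s n)
    (hm : m ≤ n) : TripleSignOrdered s m where
  right a b c d h1 h2 h3 h4 := h.right a b c d h1 h2 h3 (h4.trans_le hm)
  left a b c d h1 h2 h3 h4 := h.left a b c d h1 h2 h3 (h4.trans_le hm)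

theorem isLeft_flip_iff {s : ℕ → ℕ → ℕ → Bool} {i j m : ℕ} (hij : i < j) :
    IsLeft (flipSign s) i j m ↔ m ≠ i ∧ m ≠ j ∧ ¬ IsLeft s i j m := by
  unfold IsLeft flipSign
  rcases lt_trichotomy m i with h | h | h
  · have h1 : ¬ i < m := by omega
    have h2 : ¬ j < m := by omega
    have h3 : m ≠ i := by omega
    have h4 : m ≠ j := by omega
    simp [*]
  · have h2 : ¬ j < i := by omega
    simp [*]
  · have h0 : ¬ m < i := by omega
    have h3 : m ≠ i := by omega
    rcases lt_trichotomy m j with h' | h' | h'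
    · have h1 : ¬ j < m := by omega
      have h4 : m ≠ j := by omega
      simp [*]
    · have h1 : ¬ j < i := by omega
      simp [*]
    · have h1 : ¬ m < j := by omega
      have h4 : m ≠ j := by omega
      simp [*]

theorem IsLeft.ne {s : ℕ → ℕ → ℕ → Bool} {i j m : ℕ} (hij : i < j) (h : IsLeft s i j m) :
    m ≠ i ∧ m ≠ j := by
  unfold IsLeft at h; omega

theorem numLeft_add_flip (s : ℕ → ℕ → ℕ → Bool) {n i j : ℕ} (hij : i < j) (hj : j < n) :
    numLeft s n i j + numLeft (flipSign s) n i j + 2 = n := by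
  have h1 : ∑ m ∈ range n, (if m = i then 1 else 0) = 1 := by
    rw [sum_ite_eq' (range n) i]; simp; omega
  have h2 : ∑ m ∈ range n, (if m = j then 1 else 0) = 1 := by
    rw [sum_ite_eq' (range n) j]; simp; omega
  have key : ∑ m ∈ range n, ((if IsLeft s i j m then 1 else 0) +
      (if IsLeft (flipSign s) i j m then 1 else 0) +
      (if m = i then 1 else 0) + (if m = j then 1 else 0)) = n := by
    conv_rhs => rw [← card_range n, card_eq_sum_ones]
    refine sum_congr rfl fun m _ => ?_
    have h := isLeft_flip_iff (s := s) (m := m) hij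
    have h' := fun h => IsLeft.ne (s := s) (m := m) hij h
    by_cases hl : IsLeft s i j m
    · obtain ⟨ha, hb⟩ := h' hl
      simp [h, hl, ha, hb]
    · rcases eq_or_ne m i with rfl | ha
      · simp [h, hl, hij.ne]
      · rcases eq_or_ne m j with rfl | hb
        · simp [h, hl, ha]
        · simp [h, hl, ha, hb]
  simp only [sum_add_distrib, h1, h2, ← card_filter] at key
  exact key

theorem flipSign_flipSign (s : ℕ → ℕ → ℕ → Bool) : flipSign (flipSign s) = s := by
  funext i j k; simp [flipSign]

/-! The order of the edges at a vertex: `IsLeft s i b a` says that the edge `ia` is above `ib`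
for `a, b > i`, and `IsLeft s b d a` says that `ad` is above `bd` for `a, b < d`. -/

theorem isLeft_right_total (s : ℕ → ℕ → ℕ → Bool) {i a b : ℕ} (ha : i < a) (hb : i < b)
    (hab : a ≠ b) : IsLeft s i b a ∨ IsLeft s i a b := by
  unfold IsLeft
  rcases lt_or_gt_of_ne hab with h | h
  · cases hs : s i a b <;> simp [*]
  · cases hs : s i b a <;> simp [*]

theorem isLeft_left_total (s : ℕ → ℕ → ℕ → Bool) {d a b : ℕ} (ha : a < d) (hb : b < d)
    (hab : a ≠ b) : IsLeft s b d a ∨ IsLeft s a d b := by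
  unfold IsLeft
  rcases lt_or_gt_of_ne hab with h | h
  · cases hs : s a b d <;> simp [*]
  · cases hs : s b a d <;> simp [*]

theorem isLeft_right_iff {s : ℕ → ℕ → ℕ → Bool} {i a b : ℕ} (ha : i < a) :
    IsLeft s i b a ↔ (a < b ∧ s i a b = false) ∨ (b < a ∧ s i b a = true) := by
  have : ¬ a < i := by omega
  simp [IsLeft, ha, this]

theorem isLeft_left_iff {s : ℕ → ℕ → ℕ → Bool} {d a b : ℕ} (ha : a < d) :
    IsLeft s b d a ↔ (a < b ∧ s a b d = true) ∨ (b < a ∧ s b a d = false) := by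
  have : ¬ d < a := by omega
  simp [IsLeft, ha, this]

theorem TripleSignOrdered.right_trans {s : ℕ → ℕ → ℕ → Bool} {n : ℕ}
    (hs : TripleSignOrdered s n) {i a b c : ℕ} (ha : i < a) (hb : i < b) (hc : i < c)
    (han : a < n) (hbn : b < n) (hcn : c < n)
    (h1 : IsLeft s i b a) (h2 : IsLeft s i c b) : IsLeft s i c a := by
  have key := fun x y z h1 h2 h3 h4 => hs.right i x y z h1 h2 h3 h4
  rw [isLeft_right_iff ha] at h1 ⊢
  rw [isLeft_right_iff hb] at h2
  rcases h1 with ⟨hab, h1⟩ | ⟨hab, h1⟩ <;> rcases h2 with ⟨hbc, h2⟩ | ⟨hbc, h2⟩ <;>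
  rcases lt_trichotomy a c with hac | hac | hac <;> grind

theorem TripleSignOrdered.left_trans {s : ℕ → ℕ → ℕ → Bool} {n : ℕ}
    (hs : TripleSignOrdered s n) {d a b c : ℕ} (ha : a < d) (hb : b < d) (hc : c < d)
    (hdn : d < n)
    (h1 : IsLeft s b d a) (h2 : IsLeft s c d b) : IsLeft s c d a := by
  have key := fun x y z h1 h2 h3 => hs.left x y z d h1 h2 h3 hdn
  rw [isLeft_left_iff ha] at h1 ⊢
  rw [isLeft_left_iff hb] at h2
  rcases h1 with ⟨hab, h1⟩ | ⟨hab, h1⟩ <;> rcases h2 with ⟨hbc, h2⟩ | ⟨hbc, h2⟩ <;>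
  rcases lt_trichotomy a c with hac | hac | hac <;> grind

theorem numLeft_succ (s : ℕ → ℕ → ℕ → Bool) (n i j : ℕ) :
    numLeft s (n + 1) i j = numLeft s n i j + if IsLeft s i j n then 1 else 0 := by
  simp only [numLeft, card_filter, sum_range_succ]

theorem sum_sub_numLeft_last {s : ℕ → ℕ → ℕ → Bool} {n K : ℕ}
    (hs : TripleSignOrdered s (n + 1)) (hK : K ≤ n) :
    ∑ i ∈ range n, (K - numLeft s (n + 1) i n) = (K + 1).choose 2 := by
  have h := sum_comp_rank (range n) (fun a b => IsLeft s b n a)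
    (fun a ha h => (h.ne (mem_range.1 ha)).1 rfl)
    (fun a ha b hb c hc h1 h2 => hs.left_trans (mem_range.1 ha) (mem_range.1 hb)
      (mem_range.1 hc) (Nat.lt_add_one n) h1 h2)
    (fun a ha b hb hab => isLeft_left_total s (mem_range.1 ha) (mem_range.1 hb) hab)
    (fun t => K - t)
  rw [card_range, sum_range_const_sub K n hK] at h
  rw [← h]
  refine sum_congr rfl fun i hi => ?_
  have hn : ¬ IsLeft s i n n := fun h => (h.ne (mem_range.1 hi)).2 rfl
  rw [numLeft_succ, if_neg hn, add_zero, numLeft]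

theorem numLeft_le (s : ℕ → ℕ → ℕ → Bool) (n : ℕ) {i j : ℕ} (hij : i < j) :
    numLeft s n i j ≤ i + #{m ∈ Ioo i n | IsLeft s i j m} := by
  have hsub : {m ∈ range n | IsLeft s i j m} ⊆ range i ∪ {m ∈ Ioo i n | IsLeft s i j m} := by
    intro m hm
    simp only [mem_union, mem_filter, mem_range, mem_Ioo] at hm ⊢
    rcases lt_or_gt_of_ne (hm.2.ne hij).1 with h | h
    · exact Or.inl h
    · exact Or.inr ⟨⟨h, hm.1⟩, hm.2⟩
  simpa [numLeft] using (card_le_card hsub).trans (card_union_le _ _)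

/-- The edge `ij` has at most `K` vertices on its left, both before and after the vertex `n`
is added. -/
def IsInvariantEdge (s : ℕ → ℕ → ℕ → Bool) (n K i j : ℕ) : Prop :=
  IsLeft (flipSign s) i j n ∧ numLeft s n i j ≤ K

instance (s : ℕ → ℕ → ℕ → Bool) (n K i j : ℕ) : Decidable (IsInvariantEdge s n K i j) := by
  unfold IsInvariantEdge; infer_instance

theorem le_card_isInvariantEdge {s : ℕ → ℕ → ℕ → Bool} {n K i t : ℕ}
    (hs : TripleSignOrdered s (n + 1)) (hi : i < n) (ht : t + i ≤ K + 1)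
    (h : t ≤ #{m ∈ Ioo i (n + 1) | IsLeft s i n m}) :
    t ≤ #{j ∈ Ioo i n | IsInvariantEdge s n K i j} := by
  have irrefl : ∀ a ∈ Ioo i (n + 1), ¬ IsLeft s i a a :=
    fun a ha h => (h.ne (mem_Ioo.1 ha).1).2 rfl
  have trans : ∀ a ∈ Ioo i (n + 1), ∀ b ∈ Ioo i (n + 1), ∀ c ∈ Ioo i (n + 1),
      IsLeft s i b a → IsLeft s i c b → IsLeft s i c a := by
    intro a ha b hb c hc
    rw [mem_Ioo] at ha hb hc
    exact hs.right_trans ha.1 hb.1 hc.1 ha.2 hb.2 hc.2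
  have hn : n ∈ Ioo i (n + 1) := by simp [hi]
  refine (le_card_rank_lt (Ioo i (n + 1)) (fun a b => IsLeft s i b a) irrefl trans
    (fun a ha b hb hab => isLeft_right_total s (mem_Ioo.1 ha).1 (mem_Ioo.1 hb).1 hab)
    hn h).trans (card_le_card fun j hj => ?_)
  obtain ⟨hjm, hjn, hrank⟩ := mem_filter.1 hj
  have hne := hjn.ne hi
  have hj' := mem_Ioo.1 hjm
  refine mem_filter.2 ⟨mem_Ioo.2 ⟨hj'.1, by omega⟩, ?_, ?_⟩
  · rw [isLeft_flip_iff hj'.1]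
    exact ⟨by omega, by omega, fun h' => irrefl n hn (trans n hn j hjm n hn h' hjn)⟩
  · have h1 := numLeft_le s (n + 1) hj'.1
    have h2 := numLeft_succ s n i j
    have h3 : t ≠ 0 := by omega
    omega

theorem le_card_isInvariantEdge_or {s : ℕ → ℕ → ℕ → Bool} {n K i : ℕ}
    (hs : TripleSignOrdered s (n + 1)) (hn : 2 * K + 2 ≤ n) (hi : i ≤ K) :
    K + 1 - i ≤ #{j ∈ Ioo i n | IsInvariantEdge s n K i j} +
      #{j ∈ Ioo i n | IsInvariantEdge (flipSign s) n K i j} := by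
  have hin : i < n := by omega
  have h1 := numLeft_add_flip s hin (Nat.lt_add_one n)
  have h2 := numLeft_le s (n + 1) hin
  have h3 := numLeft_le (flipSign s) (n + 1) hin
  by_cases h : K + 1 - i ≤ #{m ∈ Ioo i (n + 1) | IsLeft s i n m}
  · exact (le_card_isInvariantEdge hs (by omega) (by omega) h).trans (Nat.le_add_right _ _)
  · exact (le_card_isInvariantEdge (K := K) hs.flip (by omega) (by omega)
      (show K + 1 - i ≤ #{m ∈ Ioo i (n + 1) | IsLeft (flipSign s) i n m} by
        omega)).trans (Nat.le_add_left _ _)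

/-- The weighted number of edges with fewer than `K` vertices on one side; for `K = k + 1` and
`2 k + 3 ≤ n` this is the number `E_{≤≤k}`. -/
def edgeWeight (s : ℕ → ℕ → ℕ → Bool) (n K : ℕ) : ℕ :=
  ∑ j ∈ range n, ∑ i ∈ range j, ((K - numLeft s n i j) + (K - numLeft (flipSign s) n i j))

theorem sub_numLeft_succ (s : ℕ → ℕ → ℕ → Bool) {n K i j : ℕ} (hij : i < j) (hj : j < n) :
    (K + 1 - numLeft s (n + 1) i j) + (K + 1 - numLeft (flipSign s) (n + 1) i j) =
      (K - numLeft s n i j) + (K - numLeft (flipSign s) n i j) +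
        ((if IsInvariantEdge s n K i j then 1 else 0) +
          if IsInvariantEdge (flipSign s) n K i j then 1 else 0) := by
  simp only [IsInvariantEdge, numLeft_succ, flipSign_flipSign]
  have h := isLeft_flip_iff (s := s) (m := n) hij
  by_cases hl : IsLeft s i j n
  · have : ¬ IsLeft (flipSign s) i j n := by tauto
    simp only [hl, this, if_true, if_false, true_and, false_and]
    split_ifs <;> omega
  · have : IsLeft (flipSign s) i j n := h.2 ⟨by omega, by omega, hl⟩
    simp only [hl, this, if_true, if_false, true_and, false_and]
    split_ifs <;> omega

theorem le_edgeWeight {s : ℕ → ℕ → ℕ → Bool} {n K : ℕ} (hs : TripleSignOrdered s n)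
    (hn : 2 * K + 1 ≤ n) : 3 * (K + 2).choose 3 ≤ edgeWeight s n K := by
  induction K generalizing n with
  | zero => simp [Nat.choose]
  | succ K ih =>
    obtain ⟨n, rfl⟩ := Nat.exists_eq_add_of_le' (show 1 ≤ n by omega)
    have ih := ih (hs.mono (Nat.le_succ n)) (by omega)
    have hl := sum_sub_numLeft_last (K := K + 1) hs (by omega)
    have hr := sum_sub_numLeft_last (K := K + 1) hs.flip (by omega)
    have hinv : (K + 2).choose 2 ≤ ∑ j ∈ range n, ∑ i ∈ range j,
        ((if IsInvariantEdge s n K i j then 1 else 0) +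
          if IsInvariantEdge (flipSign s) n K i j then 1 else 0) := by
      have hswap : ∑ j ∈ range n, ∑ i ∈ range j,
          ((if IsInvariantEdge s n K i j then 1 else 0) +
            if IsInvariantEdge (flipSign s) n K i j then 1 else 0) =
          ∑ i ∈ range n, ∑ j ∈ Ioo i n, ((if IsInvariantEdge s n K i j then 1 else 0) +
            if IsInvariantEdge (flipSign s) n K i j then 1 else 0) :=
        sum_comm' (by intro x y; simp only [mem_range, mem_Ioo]; omega)
      rw [hswap, ← sum_range_const_sub (K + 1) n (by omega)]
      refine sum_le_sum fun i _ => ?_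
      rw [sum_add_distrib, ← card_filter, ← card_filter]
      rcases le_or_gt i K with hi | hi
      · exact le_card_isInvariantEdge_or hs (by omega) hi
      · rw [Nat.sub_eq_zero_of_le (by omega)]; exact Nat.zero_le _
    have hstep : edgeWeight s (n + 1) (K + 1) = edgeWeight s n K +
        (∑ j ∈ range n, ∑ i ∈ range j, ((if IsInvariantEdge s n K i j then 1 else 0) +
          if IsInvariantEdge (flipSign s) n K i j then 1 else 0)) +
        2 * (K + 2).choose 2 := by
      unfold edgeWeight
      rw [sum_range_succ, sum_add_distrib (s := range n) (f := fun i => _ - numLeft s _ i n),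
        hl, hr, ← sum_add_distrib, two_mul]
      congr 1
      refine sum_congr rfl fun j hj => ?_
      rw [← sum_add_distrib]
      exact sum_congr rfl fun i hi => sub_numLeft_succ s (mem_range.1 hi) (mem_range.1 hj)
    have hc : (K + 1 + 2).choose 3 = (K + 2).choose 2 + (K + 2).choose 3 :=
      Nat.choose_succ_succ _ _
    omega

/-! ### Counting convex quadruples -/

/-- The number of odd crossings among the edges spanned by `a < b < c < d`. -/
def quadCrossings (s : ℕ → ℕ → ℕ → Bool) (a b c d : ℕ) : ℕ :=
  (if s a b c = s b c d then 1 else 0) + (if s a b d ≠ s a c d then 1 else 0)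

/-- The number of ways in which the edge `ij` separates `k` and `l`. -/
def separation (s : ℕ → ℕ → ℕ → Bool) (i j k l : ℕ) : ℕ :=
  (if IsLeft s i j k ∧ IsLeft (flipSign s) i j l then 1 else 0) +
    if IsLeft s i j l ∧ IsLeft (flipSign s) i j k then 1 else 0

theorem isLeft_of_lt {s : ℕ → ℕ → ℕ → Bool} {m i j : ℕ} (h : m < i) (hij : i < j) :
    IsLeft s i j m ↔ s m i j = true := by
  have h1 : ¬ i < m := by omega
  have h2 : ¬ j < m := by omega
  simp [IsLeft, *]

theorem isLeft_of_mem {s : ℕ → ℕ → ℕ → Bool} {m i j : ℕ} (h : i < m) (hj : m < j) :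
    IsLeft s i j m ↔ s i m j = false := by
  have h1 : ¬ m < i := by omega
  have h2 : ¬ j < m := by omega
  simp [IsLeft, *]

theorem isLeft_of_gt {s : ℕ → ℕ → ℕ → Bool} {m i j : ℕ} (h : j < m) (hij : i < j) :
    IsLeft s i j m ↔ s i j m = true := by
  have h1 : ¬ m < i := by omega
  have h2 : ¬ m < j := by omega
  simp [IsLeft, *]

theorem sum_separation_add_quadCrossings {s : ℕ → ℕ → ℕ → Bool} {n a b c d : ℕ}
    (hs : TripleSignOrdered s n) (hab : a < b) (hbc : b < c) (hcd : c < d) (hd : d < n) :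
    separation s a d b c + separation s b d a c + separation s c d a b +
      (separation s b c a d + separation s a c b d + separation s a b c d) +
      quadCrossings s a b c d = 3 := by
  have hac := hab.trans hbc
  have hbd := hbc.trans hcd
  have had := hab.trans hbd
  have h1 := hs.right a b c d hab hbc hcd hd
  have h2 := hs.left a b c d hab hbc hcd hd
  simp only [separation, quadCrossings, isLeft_of_mem, isLeft_of_lt, isLeft_of_gt, flipSign,
    hab, hbc, hcd, hac, hbd, had]
  revert h1 h2
  cases s a b c <;> cases s a b d <;> cases s a c d <;> cases s b c d <;> simp

theorem numLeft_mul_flip (s : ℕ → ℕ → ℕ → Bool) (n : ℕ) {i j : ℕ} (hij : i < j) :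
    numLeft s n i j * numLeft (flipSign s) n i j =
      ∑ l ∈ range n, ∑ k ∈ range l, separation s i j k l := by
  unfold numLeft separation
  rw [← sum_range_offDiag n
    (fun k l => if IsLeft s i j k ∧ IsLeft (flipSign s) i j l then 1 else 0), card_filter,
    card_filter, sum_mul_sum]
  · refine sum_congr rfl fun k _ => sum_congr rfl fun l _ => ?_
    by_cases h1 : IsLeft s i j k <;> by_cases h2 : IsLeft (flipSign s) i j l <;> simp [h1, h2]
  · intro k
    rw [if_neg]
    rw [isLeft_flip_iff hij]
    tauto

theorem sum_mul_add_sum_quadCrossings {s : ℕ → ℕ → ℕ → Bool} {n : ℕ}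
    (hs : TripleSignOrdered s n) :
    ∑ j ∈ range n, ∑ i ∈ range j, numLeft s n i j * numLeft (flipSign s) n i j +
      ∑ d ∈ range n, ∑ c ∈ range d, ∑ b ∈ range c, ∑ a ∈ range b, quadCrossings s a b c d =
      3 * n.choose 4 := by
  have h0 : ∑ j ∈ range n, ∑ i ∈ range j, numLeft s n i j * numLeft (flipSign s) n i j =
      ∑ j ∈ range n, ∑ i ∈ range j, ∑ l ∈ range n, ∑ k ∈ range l,
        if i < j then separation s i j k l else 0 := by
    refine sum_congr rfl fun j _ => sum_congr rfl fun i hi => ?_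
    have hij := mem_range.1 hi
    simp only [hij, if_true]
    exact numLeft_mul_flip s n hij
  rw [h0, sum_range_edge_edge n (fun i j k l => if i < j then separation s i j k l else 0)]
  · have hc : 3 * n.choose 4 =
        ∑ d ∈ range n, ∑ c ∈ range d, ∑ b ∈ range c, ∑ a ∈ range b, 3 := by
      simp only [sum_const, card_range, smul_eq_mul, ← sum_mul]
      have h1 : ∀ c, ∑ b ∈ range c, b = c.choose 2 := fun c => by
        simpa using sum_range_choose_right c 1
      simp only [h1, sum_range_choose_right]
      ring
    rw [hc]
    simp only [← sum_add_distrib]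
    refine sum_congr rfl fun d hd => sum_congr rfl fun c hc => sum_congr rfl fun b hb =>
      sum_congr rfl fun a ha => ?_
    rw [mem_range] at ha hb hc hd
    have h := sum_separation_add_quadCrossings hs ha hb hc hd
    simp only [ha, hb, hc, ha.trans hb, hb.trans hc, (ha.trans hb).trans hc, if_true]
    exact h
  · intro i j k l h
    split_ifs with hij
    · have hi1 : ¬ IsLeft s i j i := fun h => (h.ne hij).1 rfl
      have hj1 : ¬ IsLeft s i j j := fun h => (h.ne hij).2 rfl
      have hi2 : ¬ IsLeft (flipSign s) i j i := fun h => (h.ne hij).1 rfl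
      have hj2 : ¬ IsLeft (flipSign s) i j j := fun h => (h.ne hij).2 rfl
      rcases h with rfl | rfl | rfl | rfl <;> simp [separation, *]
    · rfl

theorem two_mul_sum_range_sub (h m : ℕ) :
    2 * ∑ K ∈ range (h + 1), (K - m) = (h - m) * (h - m + 1) := by
  induction h with
  | zero => simp
  | succ h ih =>
    rw [sum_range_succ, mul_add, ih]
    rcases le_or_gt m h with hm | hm
    · obtain ⟨d, rfl⟩ := Nat.exists_eq_add_of_le hm
      rw [show m + d + 1 - m = d + 1 by omega, show m + d - m = d by omega]
      ring
    · rw [show h - m = 0 by omega, show h + 1 - m = 0 by omega]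

theorem mul_add_sum_of_odd {h x y : ℕ} (hxy : x + y = 2 * h + 1) :
    x * y + 2 * ∑ K ∈ range (h + 1), ((K - x) + (K - y)) = h * (h + 1) := by
  rw [sum_add_distrib, mul_add, two_mul_sum_range_sub, two_mul_sum_range_sub]
  rcases le_or_gt x h with hx | hx
  · obtain ⟨d, rfl⟩ := Nat.exists_eq_add_of_le hx
    obtain rfl : y = x + 2 * d + 1 := by omega
    rw [show x + d - x = d by omega, show x + d - (x + 2 * d + 1) = 0 by omega]
    ring
  · obtain ⟨d, rfl⟩ := Nat.exists_eq_add_of_le (show y ≤ h by omega)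
    obtain rfl : x = y + 2 * d + 1 := by omega
    rw [show y + d - y = d by omega, show y + d - (y + 2 * d + 1) = 0 by omega]
    ring

theorem mul_add_sum_of_even {h x y : ℕ} (hxy : x + y = 2 * h) :
    x * y + 2 * ∑ K ∈ range (h + 1), ((K - x) + (K - y)) =
      h * h + ((h - x) + (h - y)) := by
  rw [sum_add_distrib, mul_add, two_mul_sum_range_sub, two_mul_sum_range_sub]
  rcases le_or_gt x h with hx | hx
  · obtain ⟨d, rfl⟩ := Nat.exists_eq_add_of_le hx
    obtain rfl : y = x + 2 * d := by omega
    rw [show x + d - x = d by omega, show x + d - (x + 2 * d) = 0 by omega]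
    ring
  · obtain ⟨d, rfl⟩ := Nat.exists_eq_add_of_le (show y ≤ h by omega)
    obtain rfl : x = y + 2 * d := by omega
    rw [show y + d - y = d by omega, show y + d - (y + 2 * d) = 0 by omega]
    ring

theorem sum_edges_const (n C : ℕ) : ∑ j ∈ range n, ∑ _i ∈ range j, C = n.choose 2 * C := by
  have := sum_range_choose_right n 1
  simp only [Nat.choose_one_right] at this
  simp only [sum_const, card_range, smul_eq_mul, ← sum_mul, this]

theorem sum_edgeWeight (s : ℕ → ℕ → ℕ → Bool) (n h : ℕ) :
    ∑ K ∈ range h, edgeWeight s n K = ∑ j ∈ range n, ∑ i ∈ range j, ∑ K ∈ range h,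
      ((K - numLeft s n i j) + (K - numLeft (flipSign s) n i j)) := by
  unfold edgeWeight
  rw [sum_comm]
  exact sum_congr rfl fun j _ => sum_comm

theorem le_sum_edgeWeight {s : ℕ → ℕ → ℕ → Bool} {n h : ℕ} (hs : TripleSignOrdered s n)
    (hn : 2 * h ≤ n + 1) : 3 * (h + 2).choose 4 ≤ ∑ K ∈ range h, edgeWeight s n K := by
  have hc : (h + 2).choose 4 = ∑ K ∈ range h, (K + 2).choose 3 := by
    rw [← sum_range_choose_right, sum_range_succ', sum_range_succ']
    simp [Nat.choose]
  rw [hc, mul_sum]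
  exact sum_le_sum fun K hK => le_edgeWeight hs (by have := mem_range.1 hK; omega)

theorem choose_four_mul (m : ℕ) :
    24 * (m + 3).choose 4 = (m + 3) * (m + 2) * (m + 1) * m := by
  have h := Nat.descFactorial_eq_factorial_mul_choose (m + 3) 4
  simp only [Nat.descFactorial_succ, Nat.descFactorial_zero, Nat.factorial] at h
  rw [show m + 3 - 3 = m by omega, show m + 3 - 2 = m + 1 by omega,
    show m + 3 - 1 = m + 2 by omega, Nat.sub_zero] at h
  norm_num at h
  rw [← h]; ring

theorem choose_two_mul (m : ℕ) : 2 * (m + 1).choose 2 = (m + 1) * m := by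
  rw [Nat.choose_two_right, Nat.mul_div_cancel' (Nat.even_mul_pred_self _).two_dvd]
  rfl

theorem Zval_le_sum_quadCrossings {s : ℕ → ℕ → ℕ → Bool} {n : ℕ}
    (hs : TripleSignOrdered s n) (hn : 2 ≤ n) : Zval n ≤
      ∑ d ∈ range n, ∑ c ∈ range d, ∑ b ∈ range c, ∑ a ∈ range b, quadCrossings s a b c d := by
  have hT := sum_mul_add_sum_quadCrossings hs
  set T := ∑ d ∈ range n, ∑ c ∈ range d, ∑ b ∈ range c, ∑ a ∈ range b, quadCrossings s a b c d
  refine Nat.div_le_of_le_mul ?_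
  rcases Nat.even_or_odd' n with ⟨h, rfl | rfl⟩
  · obtain ⟨h, rfl⟩ := Nat.exists_eq_add_of_le' (show 1 ≤ h by omega)
    have hw := le_sum_edgeWeight (h := h + 1) hs (by omega)
    have hw' := le_sum_edgeWeight (h := h) hs (by omega)
    have hsum : ∑ j ∈ range (2 * (h + 1)), ∑ i ∈ range j,
          numLeft s (2 * (h + 1)) i j * numLeft (flipSign s) (2 * (h + 1)) i j +
        2 * ∑ K ∈ range (h + 1), edgeWeight s (2 * (h + 1)) K =
          (2 * (h + 1)).choose 2 * (h * h) + edgeWeight s (2 * (h + 1)) h := by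
      rw [sum_edgeWeight, edgeWeight, ← sum_edges_const]
      simp only [mul_sum, ← sum_add_distrib]
      refine sum_congr rfl fun j hj => sum_congr rfl fun i hi => ?_
      have := numLeft_add_flip s (mem_range.1 hi) (mem_range.1 hj)
      rw [← mul_sum]
      exact mul_add_sum_of_even (by omega)
    rw [sum_range_succ] at hsum hw
    have c2 := choose_two_mul (2 * h + 1)
    have c4 := choose_four_mul h
    rw [show 2 * h + 1 + 1 = 2 * (h + 1) by ring] at c2
    rw [show 2 * (h + 1) / 2 = h + 1 by omega, show (2 * (h + 1) - 1) / 2 = h by omega,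
      show (2 * (h + 1) - 2) / 2 = h by omega]
    rcases Nat.eq_zero_or_pos h with rfl | hpos
    · simp
    · obtain ⟨q, rfl⟩ := Nat.exists_eq_add_of_le' (show 1 ≤ h by omega)
      have c4' := choose_four_mul q
      have c4n := choose_four_mul (2 * q + 1)
      rw [show 2 * q + 1 + 3 = 2 * (q + 1 + 1) by ring] at c4n
      rw [show (2 * (q + 1 + 1) - 3) / 2 = q by omega]
      simp only [show q + 1 + 1 + 2 = q + 1 + 3 by ring, show q + 1 + 2 = q + 3 by ring] at *
      nlinarith
  · obtain ⟨h, rfl⟩ := Nat.exists_eq_add_of_le' (show 1 ≤ h by omega)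
    have hw := le_sum_edgeWeight (h := h + 1) hs (by omega)
    have hsum : ∑ j ∈ range (2 * (h + 1) + 1), ∑ i ∈ range j,
          numLeft s (2 * (h + 1) + 1) i j * numLeft (flipSign s) (2 * (h + 1) + 1) i j +
        2 * ∑ K ∈ range (h + 1), edgeWeight s (2 * (h + 1) + 1) K =
          (2 * (h + 1) + 1).choose 2 * (h * (h + 1)) := by
      rw [sum_edgeWeight, ← sum_edges_const]
      simp only [mul_sum, ← sum_add_distrib]
      refine sum_congr rfl fun j hj => sum_congr rfl fun i hi => ?_
      have := numLeft_add_flip s (mem_range.1 hi) (mem_range.1 hj)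
      rw [← mul_sum]
      exact mul_add_sum_of_odd (by omega)
    have c2 := choose_two_mul (2 * (h + 1))
    have c4 := choose_four_mul h
    have c4n := choose_four_mul (2 * h)
    rw [show 2 * h + 3 = 2 * (h + 1) + 1 by ring] at c4n
    rw [show (2 * (h + 1) + 1) / 2 = h + 1 by omega,
      show (2 * (h + 1) + 1 - 1) / 2 = h + 1 by omega,
      show (2 * (h + 1) + 1 - 2) / 2 = h by omega, show (2 * (h + 1) + 1 - 3) / 2 = h by omega]
    rw [show h + 1 + 2 = h + 3 by ring] at hw
    nlinarith

/-! ### Parity of crossings -/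

open Filter Topology

/-- A continuous function whose zeros are finitely many sign changes has an even number of zeros
between two points exactly when its values there have the same sign. -/
theorem even_ncard_zeros_iff {g : ℝ → ℝ} {s u : ℝ} (hsu : s < u)
    (hg : ContinuousOn g (Set.Icc s u)) (hfin : {t | t ∈ Set.Ioo s u ∧ g t = 0}.Finite)
    (hsign : ∀ t ∈ Set.Ioo s u, g t = 0 → ∃ ε > 0, ∀ p ∈ Set.Ioo s u, t - ε < p → p < t →
      ∀ q ∈ Set.Ioo s u, t < q → q < t + ε → g p * g q < 0)
    (hs : g s ≠ 0) (hu : g u ≠ 0) :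
    Even {t | t ∈ Set.Ioo s u ∧ g t = 0}.ncard ↔ 0 < g s * g u := by
  have nozero : ∀ p q : ℝ, p < q → Set.Icc p q ⊆ Set.Icc s u → (∀ t ∈ Set.Icc p q, g t ≠ 0) →
      0 < g p * g q := by
    intro p q hpq hsub hne
    by_contra hcon
    have hcon := not_lt.1 hcon
    have hc : ContinuousOn g (Set.uIcc p q) := by
      rw [Set.uIcc_of_le hpq.le]; exact hg.mono hsub
    have h0 : (0 : ℝ) ∈ Set.uIcc (g p) (g q) := by
      rcases mul_nonpos_iff.1 hcon with h | h
      · exact Set.mem_uIcc.2 (Or.inr ⟨h.2, h.1⟩)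
      · exact Set.mem_uIcc.2 (Or.inl h)
    obtain ⟨t, ht, h0⟩ := intermediate_value_uIcc hc h0
    rw [Set.uIcc_of_le hpq.le] at ht
    exact hne t ht h0
  induction hm : {t | t ∈ Set.Ioo s u ∧ g t = 0}.ncard generalizing s with
  | zero =>
    rw [Set.ncard_eq_zero hfin] at hm
    simp only [Even.zero, true_iff]
    refine nozero s u hsu subset_rfl fun t ht h0 => ?_
    rcases eq_or_lt_of_le ht.1 with rfl | h1
    · exact hs h0
    rcases eq_or_lt_of_le ht.2 with rfl | h2
    · exact hu h0
    exact (Set.eq_empty_iff_forall_notMem.1 hm t) ⟨⟨h1, h2⟩, h0⟩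
  | succ m ih =>
    have hne : hfin.toFinset.Nonempty := by
      rw [Set.Finite.toFinset_nonempty]
      exact Set.nonempty_of_ncard_ne_zero (by omega)
    set z := hfin.toFinset.min' hne
    have hzmem : z ∈ {t | t ∈ Set.Ioo s u ∧ g t = 0} :=
      (Set.Finite.mem_toFinset hfin).1 (Finset.min'_mem _ hne)
    have hzmin : ∀ t ∈ Set.Ioo s u, g t = 0 → z ≤ t := fun t ht h0 =>
      Finset.min'_le _ _ ((Set.Finite.mem_toFinset hfin).2 ⟨ht, h0⟩)
    obtain ⟨⟨hz1, hz2⟩, hz0⟩ := hzmem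
    obtain ⟨ε, hε, hloc⟩ := hsign z ⟨hz1, hz2⟩ hz0
    obtain ⟨p, hp1, hp2⟩ := exists_between (max_lt hz1 (sub_lt_self z hε))
    obtain ⟨q, hq1, hq2⟩ := exists_between (lt_min hz2 (lt_add_of_pos_right z hε))
    obtain ⟨hp1, hp3⟩ := max_lt_iff.1 hp1
    obtain ⟨hq2, hq3⟩ := lt_min_iff.1 hq2
    have hpm : p ∈ Set.Ioo s u := ⟨hp1, by linarith⟩
    have hqm : q ∈ Set.Ioo s u := ⟨by linarith, hq2⟩
    have hpq : g p * g q < 0 := hloc p hpm hp3 hp2 q hqm hq1 hq3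
    have hsp : 0 < g s * g p := by
      refine nozero s p hp1 (Set.Icc_subset_Icc_right hpm.2.le) fun t ht h0 => ?_
      rcases eq_or_lt_of_le ht.1 with rfl | h1
      · exact hs h0
      · have := hzmin t ⟨h1, by linarith [ht.2, hpm.2]⟩ h0
        linarith [ht.2]
    have hq0 : g q ≠ 0 := by rintro h; simp [h] at hpq
    have hsub : Set.Ioo q u ⊆ Set.Ioo s u := Set.Ioo_subset_Ioo_left hqm.1.le
    have hset : {t | t ∈ Set.Ioo s u ∧ g t = 0} =
        insert z {t | t ∈ Set.Ioo q u ∧ g t = 0} := by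
      ext t
      simp only [Set.mem_ofPred_eq, Set.mem_insert_iff]
      constructor
      · rintro ⟨ht, h0⟩
        rcases eq_or_lt_of_le (hzmin t ht h0) with h | h
        · exact Or.inl h.symm
        · refine Or.inr ⟨⟨?_, ht.2⟩, h0⟩
          by_contra hcon
          have := hloc p hpm hp3 hp2 t ht h (by linarith)
          simp [h0] at this
      · rintro (rfl | ⟨ht, h0⟩)
        · exact ⟨⟨hz1, hz2⟩, hz0⟩
        · exact ⟨hsub ht, h0⟩
    have hfin' : {t | t ∈ Set.Ioo q u ∧ g t = 0}.Finite :=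
      hfin.subset fun t ht => ⟨hsub ht.1, ht.2⟩
    rw [hset, Set.ncard_insert_of_notMem (fun h => by linarith [h.1.1]) hfin'] at hm
    have hrec : Even m ↔ 0 < g q * g u := ih hq2 (hg.mono (Set.Icc_subset_Icc_left hqm.1.le)) hfin'
      (fun t ht h0 => by
        obtain ⟨δ, hδ, h⟩ := hsign t (hsub ht) h0
        exact ⟨δ, hδ, fun p hp h1 h2 q hq => h p (hsub hp) h1 h2 q (hsub hq)⟩)
      hq0 (fun a b hab hsub' => nozero a b hab
        (hsub'.trans (Set.Icc_subset_Icc_left hqm.1.le))) (by omega)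
    rw [Nat.even_add_one, hrec]
    have hsq : g s * g q < 0 := by
      have h2 : 0 < g p * g p := mul_self_pos.2 fun h => by simp [h] at hpq
      nlinarith
    have hq2 : 0 < g q * g q := mul_self_pos.2 hq0
    constructor
    · intro h
      have : g q * g u < 0 := lt_of_le_of_ne (not_lt.1 h) (mul_ne_zero hq0 hu)
      by_contra hcon
      nlinarith [mul_pos_of_neg_of_neg hsq this, mul_nonneg hq2.le (neg_nonneg.2 (not_lt.1 hcon))]
    · intro h h'
      nlinarith [mul_neg_of_neg_of_pos hsq h', mul_pos hq2 h]

namespace XMonotoneDrawing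

variable {n : ℕ} (D : XMonotoneDrawing n)

theorem crossCount_comm (i j k l : Fin n) : D.crossCount i j k l = D.crossCount k l i j := by
  unfold crossCount crossSet
  simp only [max_comm (D.x i), min_comm (D.x j), eq_comm (a := D.e i j _)]

/-- The parity of the number of crossings, read off near the ends of the common domain. -/
theorem even_crossCount_iff {i j k l : Fin n} (hij : i < j) (hkl : k < l)
    (hne : (i, j) ≠ (k, l)) {s u : ℝ} (hsu : s < u) (hs : max (D.x i) (D.x k) ≤ s)
    (hu : u ≤ min (D.x j) (D.x l)) (hcross : D.crossSet i j k l ⊆ Set.Ioo s u)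
    (hs0 : D.e i j s ≠ D.e k l s) (hu0 : D.e i j u ≠ D.e k l u) :
    Even (D.crossCount i j k l) ↔
      0 < (D.e i j s - D.e k l s) * (D.e i j u - D.e k l u) := by
  have hset : D.crossSet i j k l = {t | t ∈ Set.Ioo s u ∧ D.e i j t - D.e k l t = 0} := by
    ext t
    refine ⟨fun ht => ⟨hcross ht, sub_eq_zero.2 ht.2.2⟩, fun ht => ?_⟩
    exact ⟨hs.trans_lt ht.1.1, ht.1.2.trans_le hu, sub_eq_zero.1 ht.2⟩
  have hs' := max_le_iff.1 hs
  have hu' := le_min_iff.1 hu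
  rw [crossCount, hset]
  refine even_ncard_zeros_iff (g := fun t => D.e i j t - D.e k l t) hsu
    (((D.cont i j hij).mono (Set.Icc_subset_Icc hs'.1 hu'.1)).sub
      ((D.cont k l hkl).mono (Set.Icc_subset_Icc hs'.2 hu'.2)))
    (hset ▸ D.cross_finite i j k l hij hkl hne) ?_ (sub_ne_zero.2 hs0) (sub_ne_zero.2 hu0)
  intro t ht h0
  obtain ⟨ε, hε, h⟩ := D.sign_change i j k l hij hkl hne t (hs.trans_lt ht.1)
    (ht.2.trans_le hu) (sub_eq_zero.1 h0)
  exact ⟨ε, hε, fun p hp h1 h2 q hq => h p (hs.trans_lt hp.1) h1 h2 q (hq.2.trans_le hu)⟩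

theorem crossCount_of_lt (a d : Fin n) {b c : Fin n} (hbc : b < c) :
    D.crossCount a b c d = 0 := by
  have hx := D.x_strictMono hbc
  have : D.crossSet a b c d = ∅ := by
    refine Set.eq_empty_iff_forall_notMem.2 fun t ht => ?_
    have h1 := (max_lt_iff.1 ht.1).2
    have h2 := (lt_min_iff.1 ht.2.1).1
    linarith
  rw [crossCount, this, Set.ncard_empty]

theorem even_crossCount_nested {a b c d : Fin n} (hab : a < b) (hbc : b < c) (hcd : c < d) :
    Even (D.crossCount a d b c) ↔ 0 < D.e a d (D.x b) * D.e a d (D.x c) := by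
  have hx := D.x_strictMono
  have h := D.even_crossCount_iff (hab.trans (hbc.trans hcd)) hbc
    (by simp [hab.ne]) (hx hbc) (max_le (hx hab).le le_rfl) (le_min (hx hcd).le le_rfl)
    (fun t ht => ⟨(max_lt_iff.1 ht.1).2, (lt_min_iff.1 ht.2.1).2⟩)
    (by rw [D.end_left b c hbc]; exact D.avoid_vertex a b d hab (hbc.trans hcd))
    (by rw [D.end_right b c hbc]; exact D.avoid_vertex a c d (hab.trans hbc) hcd)
  rwa [D.end_left b c hbc, D.end_right b c hbc, sub_zero, sub_zero] at h

theorem even_crossCount_interleaved {a b c d : Fin n} (hab : a < b) (hbc : b < c)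
    (hcd : c < d) :
    Even (D.crossCount a c b d) ↔ D.e a c (D.x b) * D.e b d (D.x c) < 0 := by
  have hx := D.x_strictMono
  have hac := hab.trans hbc
  have hbd := hbc.trans hcd
  have h := D.even_crossCount_iff hac hbd
    (by simp [hab.ne]) (hx hbc) (max_le (hx hab).le le_rfl) (le_min le_rfl (hx hcd).le)
    (fun t ht => ⟨(max_lt_iff.1 ht.1).2, (lt_min_iff.1 ht.2.1).1⟩)
    (by rw [D.end_left b d hbd]; exact D.avoid_vertex a b c hab hbc)
    (by rw [D.end_right a c hac]; exact (D.avoid_vertex b c d hbc hcd).symm)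
  rw [D.end_left b d hbd, D.end_right a c hac, sub_zero, zero_sub, mul_neg, neg_pos] at h
  exact h

theorem sig_eq_true_iff {i j k : Fin n} : D.sig i j k = true ↔ 0 < D.e i k (D.x j) := by
  simp [sig]

theorem sig_eq_sig_iff {i j k i' j' k' : Fin n} (h1 : i < j) (h2 : j < k) (h1' : i' < j')
    (h2' : j' < k') :
    D.sig i j k = D.sig i' j' k' ↔ 0 < D.e i k (D.x j) * D.e i' k' (D.x j') := by
  rw [Bool.eq_iff_iff, sig_eq_true_iff, sig_eq_true_iff]
  have h := D.avoid_vertex i j k h1 h2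
  have h' := D.avoid_vertex i' j' k' h1' h2'
  rcases lt_or_gt_of_ne h with h | h <;> rcases lt_or_gt_of_ne h' with h' | h'
  · simp [h.not_gt, h'.not_gt, mul_pos_of_neg_of_neg h h']
  · simp [h.not_gt, h', (mul_neg_of_neg_of_pos h h').not_gt]
  · simp [h, h'.not_gt, (mul_neg_of_pos_of_neg h h').not_gt]
  · simp [h, h', mul_pos h h']

variable {D}

/-- Just to the right of `v a`, the edges `ab` and `ac` are ordered as at `v b`. -/
theorem WeaklySemisimple.eventually_right (hD : D.WeaklySemisimple) {a b c : Fin n}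
    (hab : a < b) (hbc : b < c) :
    ∀ᶠ s in 𝓝[>] D.x a, 0 < (D.e a c s - D.e a b s) * D.e a c (D.x b) := by
  have hx := D.x_strictMono
  have hac := hab.trans hbc
  have hne : (a, c) ≠ (a, b) := by simp [hbc.ne']
  have hfin : (D.crossSet a c a b).Finite := D.cross_finite a c a b hac hab hne
  have h1 : ∀ᶠ s in 𝓝[>] D.x a, ∀ t ∈ D.crossSet a c a b, s < t :=
    (Filter.eventually_all_finite hfin).2 fun t ht =>
      nhdsWithin_le_nhds (Iio_mem_nhds (max_lt_iff.1 ht.1).1)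
  have h2 : ∀ᶠ s in 𝓝[>] D.x a, s ∈ Set.Ioo (D.x a) (D.x b) := Ioo_mem_nhdsGT (hx hab)
  filter_upwards [h1, h2] with s h1 h2
  have h := D.even_crossCount_iff hac hab hne h2.2 (by simpa using h2.1.le)
    (le_min (hx hbc).le le_rfl) (fun t ht => ⟨h1 t ht, (lt_min_iff.1 ht.2.1).2⟩)
    (fun h0 => lt_irrefl s (h1 s ⟨by simpa using h2.1,
      lt_min (h2.2.trans (hx hbc)) h2.2, h0⟩))
    (by rw [D.end_right a b hab]; exact D.avoid_vertex a b c hab hbc)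
  rw [D.end_right a b hab, sub_zero] at h
  exact h.1 (hD a c a b hac hab hne (Or.inl rfl))

/-- Just to the left of `v c`, the edges `ac` and `bc` are ordered as at `v b`. -/
theorem WeaklySemisimple.eventually_left (hD : D.WeaklySemisimple) {a b c : Fin n}
    (hab : a < b) (hbc : b < c) :
    ∀ᶠ s in 𝓝[<] D.x c, 0 < (D.e a c s - D.e b c s) * D.e a c (D.x b) := by
  have hx := D.x_strictMono
  have hac := hab.trans hbc
  have hne : (a, c) ≠ (b, c) := by simp [hab.ne]
  have hfin : (D.crossSet a c b c).Finite := D.cross_finite a c b c hac hbc hne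
  have h1 : ∀ᶠ s in 𝓝[<] D.x c, ∀ t ∈ D.crossSet a c b c, t < s :=
    (Filter.eventually_all_finite hfin).2 fun t ht =>
      nhdsWithin_le_nhds (Ioi_mem_nhds (lt_min_iff.1 ht.2.1).1)
  have h2 : ∀ᶠ s in 𝓝[<] D.x c, s ∈ Set.Ioo (D.x b) (D.x c) := Ioo_mem_nhdsLT (hx hbc)
  filter_upwards [h1, h2] with s h1 h2
  have h := D.even_crossCount_iff hac hbc hne h2.1 (max_le (hx hab).le le_rfl)
    (by simpa using h2.2.le) (fun t ht => ⟨(max_lt_iff.1 ht.1).2, h1 t ht⟩)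
    (by rw [D.end_left b c hbc]; exact D.avoid_vertex a b c hab hbc)
    (fun h0 => lt_irrefl s (h1 s ⟨max_lt ((hx hab).trans h2.1) h2.1,
      by simpa using h2.2, h0⟩))
  rw [D.end_left b c hbc, sub_zero, mul_comm] at h
  exact h.1 (hD a c b c hac hbc hne (by simp [Adj]))

theorem mul_pos_of_sub_mul_pos {p q r x y z : ℝ} (hx : 0 < (q - p) * x)
    (hy : 0 < (r - q) * y) (hz : 0 < (r - p) * z) (hxy : 0 < x * y) : 0 < z * x := by
  rcases mul_pos_iff.1 hx with hx | hx <;> rcases mul_pos_iff.1 hy with hy | hy <;>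
  rcases mul_pos_iff.1 hz with hz | hz <;> nlinarith

theorem WeaklySemisimple.sig_right (hD : D.WeaklySemisimple) {a b c d : Fin n}
    (hab : a < b) (hbc : b < c) (hcd : c < d) (h : D.sig a b c = D.sig a c d) :
    D.sig a b d = D.sig a b c := by
  obtain ⟨s, h1, h2, h3⟩ := ((hD.eventually_right hab hbc).and
    ((hD.eventually_right (hab.trans hbc) hcd).and
      (hD.eventually_right hab (hbc.trans hcd)))).exists
  rw [D.sig_eq_sig_iff hab hbc (hab.trans hbc) hcd] at h
  rw [D.sig_eq_sig_iff hab (hbc.trans hcd) hab hbc]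
  exact mul_pos_of_sub_mul_pos h1 h2 h3 h

theorem WeaklySemisimple.sig_left (hD : D.WeaklySemisimple) {a b c d : Fin n}
    (hab : a < b) (hbc : b < c) (hcd : c < d) (h : D.sig a b d = D.sig b c d) :
    D.sig a c d = D.sig a b d := by
  obtain ⟨s, h1, h2, h3⟩ := ((hD.eventually_left hab (hbc.trans hcd)).and
    ((hD.eventually_left hbc hcd).and (hD.eventually_left (hab.trans hbc) hcd))).exists
  rw [D.sig_eq_sig_iff hab (hbc.trans hcd) hbc hcd] at h
  rw [D.sig_eq_sig_iff (hab.trans hbc) hcd hab (hbc.trans hcd)]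
  refine mul_pos_of_sub_mul_pos (p := -D.e a d s) (q := -D.e b d s) (r := -D.e c d s)
    ?_ ?_ ?_ h <;> linarith

/-! ### Passing to triple signs on natural numbers -/

variable [NeZero n] (D)

/-- The signature of `D`, with vertices indexed by natural numbers below `n`. -/
noncomputable def natSig (i j k : ℕ) : Bool :=
  D.sig (Fin.ofNat n i) (Fin.ofNat n j) (Fin.ofNat n k)

theorem ofNat_lt_ofNat {i j : ℕ} (hij : i < j) (hj : j < n) :
    Fin.ofNat n i < Fin.ofNat n j := by
  rw [Fin.lt_def]
  simpa [Fin.ofNat, Nat.mod_eq_of_lt hj, Nat.mod_eq_of_lt (hij.trans hj)] using hij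

open Classical in
/-- The indicator of the edges `ij` and `kl` crossing an odd number of times. -/
noncomputable def oddCross (i j k l : ℕ) : ℕ :=
  if (Fin.ofNat n i, Fin.ofNat n j) ≠ (Fin.ofNat n k, Fin.ofNat n l) ∧
    Odd (D.crossCount (Fin.ofNat n i) (Fin.ofNat n j) (Fin.ofNat n k) (Fin.ofNat n l))
  then 1 else 0

variable {D}

theorem WeaklySemisimple.tripleSignOrdered (hD : D.WeaklySemisimple) :
    TripleSignOrdered D.natSig n where
  right a b c d hab hbc hcd hd := hD.sig_right (ofNat_lt_ofNat hab (by omega))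
    (ofNat_lt_ofNat hbc (by omega)) (ofNat_lt_ofNat hcd hd)
  left a b c d hab hbc hcd hd := hD.sig_left (ofNat_lt_ofNat hab (by omega))
    (ofNat_lt_ofNat hbc (by omega)) (ofNat_lt_ofNat hcd hd)

theorem WeaklySemisimple.oddCross_eq_zero (hD : D.WeaklySemisimple) {i j k l : ℕ}
    (hij : i < j) (hj : j < n) (hkl : k < l) (hl : l < n)
    (h : i = k ∨ i = l ∨ j = k ∨ j = l) : D.oddCross i j k l = 0 := by
  refine if_neg fun hodd => Nat.not_even_iff_odd.2 hodd.2 ?_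
  refine hD _ _ _ _ (ofNat_lt_ofNat hij hj) (ofNat_lt_ofNat hkl hl) hodd.1 ?_
  rcases h with rfl | rfl | rfl | rfl <;> simp [Adj]

theorem oddCross_comm (i j k l : ℕ) : D.oddCross i j k l = D.oddCross k l i j := by
  unfold oddCross
  rw [D.crossCount_comm]
  simp only [ne_comm]

theorem oddCross_eq_zero_of_even {i j k l : ℕ} (h : Even (D.crossCount (Fin.ofNat n i)
    (Fin.ofNat n j) (Fin.ofNat n k) (Fin.ofNat n l))) : D.oddCross i j k l = 0 :=
  if_neg fun hodd => Nat.not_even_iff_odd.2 hodd.2 h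

theorem oddCross_eq_one {i j k l : ℕ} (hne : Fin.ofNat n i ≠ Fin.ofNat n k)
    (h : ¬ Even (D.crossCount (Fin.ofNat n i) (Fin.ofNat n j) (Fin.ofNat n k)
      (Fin.ofNat n l))) : D.oddCross i j k l = 1 :=
  if_pos ⟨fun h' => hne (Prod.ext_iff.1 h').1, Nat.not_even_iff_odd.1 h⟩

theorem sum_oddCross_eq {a b c d : ℕ} (hab : a < b) (hbc : b < c) (hcd : c < d) (hd : d < n) :
    D.oddCross a d b c + D.oddCross b d a c + D.oddCross c d a b +
      (D.oddCross b c a d + D.oddCross a c b d + D.oddCross a b c d) =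
      2 * quadCrossings D.natSig a b c d := by
  have hab' := ofNat_lt_ofNat hab (show b < n by omega)
  have hbc' := ofNat_lt_ofNat hbc (show c < n by omega)
  have hcd' := ofNat_lt_ofNat hcd hd
  have hdisj : D.oddCross a b c d = 0 := oddCross_eq_zero_of_even (by
    rw [D.crossCount_of_lt _ _ hbc']; exact Even.zero)
  have hnest : D.oddCross a d b c = if D.natSig a b d ≠ D.natSig a c d then 1 else 0 := by
    have h := D.even_crossCount_nested hab' hbc' hcd'
    rw [← D.sig_eq_sig_iff hab' (hbc'.trans hcd') (hab'.trans hbc') hcd'] at h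
    split_ifs with hs
    · exact oddCross_eq_one hab'.ne fun he => hs (h.1 he)
    · exact oddCross_eq_zero_of_even (h.2 (not_not.1 hs))
  have hinter : D.oddCross a c b d = if D.natSig a b c = D.natSig b c d then 1 else 0 := by
    have h := D.even_crossCount_interleaved hab' hbc' hcd'
    have h' := D.sig_eq_sig_iff hab' hbc' hbc' hcd'
    split_ifs with hs
    · exact oddCross_eq_one hab'.ne fun he => (h.1 he).not_gt (h'.1 hs)
    · refine oddCross_eq_zero_of_even (h.2 (lt_of_le_of_ne (not_lt.1 fun h0 => hs (h'.2 h0)) ?_))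
      exact mul_ne_zero (D.avoid_vertex _ _ _ hab' hbc') (D.avoid_vertex _ _ _ hbc' hcd')
  rw [oddCross_comm b d, oddCross_comm c d, oddCross_comm b c, hdisj, hnest, hinter,
    quadCrossings]
  ring

theorem sum_pairs_eq_sum_range (n : ℕ) (G : ℕ → ℕ → ℕ) :
    ∑ p : Fin n × Fin n, (if p.1 < p.2 then G p.1 p.2 else 0) =
      ∑ j ∈ range n, ∑ i ∈ range j, G i j := by
  rw [Fintype.sum_prod_type, sum_comm]
  simp only [Fin.lt_def]
  rw [Fin.sum_univ_eq_sum_range (fun j => ∑ i : Fin n, if (i : ℕ) < j then G i j else 0)]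
  refine sum_congr rfl fun j hj => ?_
  rw [Fin.sum_univ_eq_sum_range (fun i => if i < j then G i j else 0), ← sum_filter]
  refine sum_congr ?_ fun _ _ => rfl
  ext i
  have := mem_range.1 hj
  simp only [mem_filter, mem_range]
  omega

theorem ncard_odd_pairs_eq (D : XMonotoneDrawing n) :
    {p : (Fin n × Fin n) × (Fin n × Fin n) |
      p.1.1 < p.1.2 ∧ p.2.1 < p.2.2 ∧ p.1 ≠ p.2 ∧
        Odd (D.crossCount p.1.1 p.1.2 p.2.1 p.2.2)}.ncard =
      ∑ j ∈ range n, ∑ i ∈ range j, ∑ l ∈ range n, ∑ k ∈ range l, D.oddCross i j k l := by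
  classical
  rw [← sum_pairs_eq_sum_range n
    (fun i j => ∑ l ∈ range n, ∑ k ∈ range l, D.oddCross i j k l)]
  simp only [← sum_pairs_eq_sum_range n (fun k l => D.oddCross _ _ k l)]
  rw [Set.ncard_eq_toFinset_card', Set.toFinset_ofPred, card_filter, Fintype.sum_prod_type]
  refine sum_congr rfl fun p _ => ?_
  by_cases hp : p.1 < p.2
  · simp only [hp, true_and, if_true]
    refine sum_congr rfl fun q _ => ?_
    by_cases hq : q.1 < q.2
    · simp only [hq, true_and, if_true, oddCross, Fin.ofNat_eq_cast, Fin.cast_val_eq_self]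
    · simp [hq]
  · simp [hp]

theorem WeaklySemisimple.ocr_eq (hD : D.WeaklySemisimple) :
    D.ocr = ∑ d ∈ range n, ∑ c ∈ range d, ∑ b ∈ range c, ∑ a ∈ range b,
      quadCrossings D.natSig a b c d := by
  have h0 : ∑ j ∈ range n, ∑ i ∈ range j, ∑ l ∈ range n, ∑ k ∈ range l, D.oddCross i j k l =
      ∑ j ∈ range n, ∑ i ∈ range j, ∑ l ∈ range n, ∑ k ∈ range l,
        if i < j ∧ j < n ∧ k < l ∧ l < n then D.oddCross i j k l else 0 := by
    refine sum_congr rfl fun j hj => sum_congr rfl fun i hi => sum_congr rfl fun l hl =>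
      sum_congr rfl fun k hk => ?_
    rw [mem_range] at hi hj hk hl
    simp only [hi, hj, hk, hl, and_self, if_true]
  rw [ocr, ncard_odd_pairs_eq, h0, sum_range_edge_edge n
    (fun i j k l => if i < j ∧ j < n ∧ k < l ∧ l < n then D.oddCross i j k l else 0)]
  · refine Nat.div_eq_of_eq_mul_right two_pos ?_
    simp only [mul_sum]
    refine sum_congr rfl fun d hd => sum_congr rfl fun c hc => sum_congr rfl fun b hb =>
      sum_congr rfl fun a ha => ?_
    rw [mem_range] at ha hb hc hd
    have hcn := hc.trans hd
    simp only [ha, hb, hc, hd, ha.trans hb, hb.trans hc, (ha.trans hb).trans hc, hcn,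
      hb.trans hcn, and_self, if_true]
    exact sum_oddCross_eq ha hb hc hd
  · intro i j k l h
    split_ifs with h'
    · exact hD.oddCross_eq_zero h'.1 h'.2.1 h'.2.2.1 h'.2.2.2 h
    · rfl

end XMonotoneDrawing

/-- For every `n ≥ 1` and every weakly semisimple x-monotone drawing `D`
of `K n`, the number of unordered pairs of edges crossing an odd number of times is at
least `Z(n)`. -/
theorem weakly_semisimple_monotone_ocr_ge_Z (n : ℕ) (hn : 1 ≤ n)
    (D : XMonotoneDrawing n) (hD : D.WeaklySemisimple) :
    Zval n ≤ D.ocr := by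
  have : NeZero n := ⟨by omega⟩
  rcases hn.eq_or_lt with rfl | h
  · exact Nat.zero_le _
  · rw [hD.ocr_eq]
    exact Zval_le_sum_quadCrossings hD.tripleSignOrdered h
end

section
/- For every n ≥ 1 there exists a simple x-monotone drawing of the complete graph K_n whose total number of crossings is exactly Z(n). -/
section SquareWave

/-- The square wave of half-period `m`: `+1` on `[0, m)`, `-1` on `[m, 2m)`, and so on. -/
def squareWave (m u : ℕ) : ℤ := if u / m % 2 = 0 then 1 else -1

/-- The partial sums of the square wave, a triangular wave of period `2m`. -/
def triangleWave (m x : ℕ) : ℤ := ∑ u ∈ Finset.range x, squareWave m u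

lemma squareWave_eq_one_or (m u : ℕ) : squareWave m u = 1 ∨ squareWave m u = -1 := by
  unfold squareWave; split_ifs <;> simp

lemma squareWave_add_half {m : ℕ} (hm : 0 < m) (u : ℕ) :
    squareWave m (u + m) = -squareWave m u := by
  unfold squareWave
  rw [Nat.add_div_right _ hm]
  split_ifs <;> first | rfl | omega

lemma squareWave_of_lt {m u : ℕ} (hu : u < m) : squareWave m u = 1 := by
  simp [squareWave, Nat.div_eq_of_lt hu]

lemma triangleWave_zero (m : ℕ) : triangleWave m 0 = 0 := by simp [triangleWave]

lemma triangleWave_succ (m x : ℕ) :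
    triangleWave m (x + 1) = triangleWave m x + squareWave m x := by
  simp [triangleWave, Finset.sum_range_succ]

lemma triangleWave_of_le {m x : ℕ} (hx : x ≤ m) : triangleWave m x = x := by
  induction x with
  | zero => simp [triangleWave_zero]
  | succ x ih =>
    rw [triangleWave_succ, ih (by omega), squareWave_of_lt (by omega)]
    push_cast; ring

lemma triangleWave_add_half {m : ℕ} (hm : 0 < m) (x : ℕ) :
    triangleWave m (x + m) = m - triangleWave m x := by
  induction x with
  | zero => simpa [triangleWave_zero] using triangleWave_of_le le_rfl
  | succ x ih =>
    rw [show x + 1 + m = x + m + 1 by ring, triangleWave_succ, ih, triangleWave_succ,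
      squareWave_add_half hm]
    ring

lemma triangleWave_periodic {m : ℕ} (hm : 0 < m) (x : ℕ) :
    triangleWave m (x + 2 * m) = triangleWave m x := by
  rw [show x + 2 * m = x + m + m by ring, triangleWave_add_half hm, triangleWave_add_half hm]
  ring

lemma triangleWave_reflect {m : ℕ} (hm : 0 < m) {x : ℕ} (hx : x ≤ 2 * m) :
    triangleWave m (2 * m - x) = triangleWave m x := by
  rcases le_total x m with h | h
  · rw [show 2 * m - x = (m - x) + m by omega, triangleWave_add_half hm,
      triangleWave_of_le (Nat.sub_le m x), triangleWave_of_le h]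
    push_cast [h]; ring
  · obtain ⟨y, rfl⟩ := Nat.exists_eq_add_of_le' h
    rw [show 2 * m - (y + m) = m - y by omega, triangleWave_add_half hm,
      triangleWave_of_le (Nat.sub_le m y), triangleWave_of_le (by omega)]
    push_cast [show y ≤ m by omega]; ring

/-- A sum over one period does not depend on where the period starts. -/
lemma sum_range_add_of_periodic {F : ℕ → ℤ} {n : ℕ} (hF : ∀ x, F (x + n) = F x) (b : ℕ) :
    ∑ c ∈ Finset.range n, F (b + c) = ∑ c ∈ Finset.range n, F c := by
  induction b with
  | zero => simp
  | succ b ih =>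
    have h := Finset.sum_range_succ (fun c => F (b + c)) n
    rw [Finset.sum_range_succ'] at h
    simp only [add_zero, hF] at h
    rw [← ih, ← add_right_cancel h]
    exact Finset.sum_congr rfl fun c _ => by congr 1; ring

lemma sum_range_two_mul (F : ℕ → ℤ) (m : ℕ) :
    ∑ x ∈ Finset.range (2 * m), F x
      = ∑ b ∈ Finset.range m, F (2 * b) + ∑ b ∈ Finset.range m, F (2 * b + 1) := by
  induction m with
  | zero => simp
  | succ m ih =>
    rw [show 2 * (m + 1) = 2 * m + 1 + 1 by ring, Finset.sum_range_succ, Finset.sum_range_succ,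
      ih, Finset.sum_range_succ, Finset.sum_range_succ]
    ring

lemma sum_range_double (F : ℕ → ℤ) (m : ℕ) :
    ∑ x ∈ Finset.range (2 * m), F x
      = ∑ x ∈ Finset.range m, F x + ∑ x ∈ Finset.range m, F (x + m) := by
  rw [two_mul, Finset.sum_range_add]
  simp only [add_comm m]

/-- Splitting a symmetric sum over a square along its diagonal. -/
lemma sum_square_of_symm {F : ℕ → ℕ → ℤ} (hF : ∀ b c, F b c = F c b) (n : ℕ) :
    ∑ c ∈ Finset.range n, ∑ b ∈ Finset.range n, F b c
      = 2 * ∑ c ∈ Finset.range n, ∑ b ∈ Finset.range c, F b c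
        + ∑ c ∈ Finset.range n, F c c := by
  induction n with
  | zero => simp
  | succ n ih =>
    simp only [Finset.sum_range_succ, Finset.sum_add_distrib, ih]
    rw [Finset.sum_congr rfl fun c _ => hF n c]
    ring

lemma sum_range_mul_succ (k : ℕ) :
    3 * ∑ x ∈ Finset.range k, (x : ℤ) * (x + 1) = (k - 1) * k * (k + 1) := by
  induction k with
  | zero => simp
  | succ k ih => rw [Finset.sum_range_succ, mul_add, ih]; push_cast; ring

lemma sum_range_id_int (k : ℕ) : 2 * ∑ x ∈ Finset.range k, (x : ℤ) = k * (k - 1) := by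
  induction k with
  | zero => simp
  | succ k ih => rw [Finset.sum_range_succ, mul_add, ih]; push_cast; ring

lemma sum_triangleWave {m : ℕ} (hm : 0 < m) :
    ∑ x ∈ Finset.range (2 * m), triangleWave m x = m ^ 2 := by
  rw [sum_range_double, ← Finset.sum_add_distrib]
  simp only [triangleWave_add_half hm, add_sub_cancel, Finset.sum_const, Finset.card_range,
    nsmul_eq_mul]
  ring

lemma sum_triangleWave_mul_succ {m : ℕ} (hm : 0 < m) :
    3 * ∑ x ∈ Finset.range (2 * m), triangleWave m x * triangleWave m (x + 1)
      = 2 * ((m - 1) * m * (m + 1)) := by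
  have h₁ : ∑ x ∈ Finset.range m, triangleWave m x * triangleWave m (x + 1)
      = ∑ x ∈ Finset.range m, (x : ℤ) * (x + 1) := by
    refine Finset.sum_congr rfl fun x hx => ?_
    rw [Finset.mem_range] at hx
    rw [triangleWave_of_le hx.le, triangleWave_of_le hx]
    push_cast; ring
  have h₂ : ∑ x ∈ Finset.range m, triangleWave m (x + m) * triangleWave m (x + m + 1)
      = ∑ x ∈ Finset.range m, (x : ℤ) * (x + 1) := by
    rw [← Finset.sum_range_reflect]
    refine Finset.sum_congr rfl fun x hx => ?_
    rw [Finset.mem_range] at hx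
    rw [show m - 1 - x + m + 1 = 2 * m - x by omega,
      show m - 1 - x + m = 2 * m - (x + 1) by omega, triangleWave_reflect hm (by omega),
      triangleWave_reflect hm (by omega), triangleWave_of_le hx.le, triangleWave_of_le hx]
    push_cast; ring
  rw [sum_range_double, h₁, h₂, ← sum_range_mul_succ]
  ring

lemma triangleWave_period {m : ℕ} (hm : 0 < m) : triangleWave m (2 * m) = 0 := by
  simpa [triangleWave_zero] using triangleWave_periodic hm 0

lemma squareWave_mul_self (m u : ℕ) : squareWave m u * squareWave m u = 1 := by
  rcases squareWave_eq_one_or m u with h | h <;> simp [h]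

lemma sum_squareWave_mul_triangleWave {m : ℕ} (hm : 0 < m) :
    ∑ x ∈ Finset.range (2 * m), squareWave m x * triangleWave m x = -m := by
  have h := Finset.sum_range_sub (fun x => triangleWave m x ^ 2) (2 * m)
  rw [Finset.sum_congr rfl (g := fun x => 2 * (squareWave m x * triangleWave m x) + 1)
    fun x _ => by rw [triangleWave_succ]; linear_combination squareWave_mul_self m x,
    Finset.sum_add_distrib, ← Finset.mul_sum] at h
  simp only [triangleWave_period hm, triangleWave_zero, Finset.sum_const, Finset.card_range,
    nsmul_eq_mul] at h
  push_cast at h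
  linarith

lemma sum_triangleWave_sq {m : ℕ} (hm : 0 < m) :
    ∑ x ∈ Finset.range (2 * m), triangleWave m x ^ 2
      = ∑ x ∈ Finset.range (2 * m), triangleWave m x * triangleWave m (x + 1) + m := by
  rw [← sub_eq_iff_eq_add', ← neg_inj, ← sum_squareWave_mul_triangleWave hm,
    ← Finset.sum_sub_distrib, ← Finset.sum_neg_distrib]
  refine Finset.sum_congr rfl fun x _ => ?_
  rw [triangleWave_succ]; ring

lemma sum_triangleWave_two_mul {m : ℕ} (hm : 0 < m) :
    ∑ x ∈ Finset.range (2 * m), triangleWave m (2 * x) * triangleWave m (2 * x + 1)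
      = ∑ x ∈ Finset.range (2 * m), triangleWave m x * triangleWave m (x + 1) := by
  rw [sum_range_two_mul (fun x => triangleWave m x * triangleWave m (x + 1)), sum_range_double]
  congr 1
  · rw [← Finset.sum_range_reflect]
    refine Finset.sum_congr rfl fun x hx => ?_
    rw [Finset.mem_range] at hx
    rw [← triangleWave_reflect hm (x := 2 * x + 1) (by omega),
      ← triangleWave_reflect hm (x := 2 * x + 1 + 1) (by omega), mul_comm,
      ← triangleWave_periodic hm (2 * m - (2 * x + 1)),
      ← triangleWave_periodic hm (2 * m - (2 * x + 1 + 1))]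
    congr 2 <;> omega

/-- The signed number of quadruples `a < b < c < d < 2m`, weighted by
`squareWave (a + c) * squareWave (b + d)`, after summation over `a` and `d`. -/
lemma two_mul_sum_triangleWave_even {m : ℕ} (hm : 0 < m) :
    2 * ∑ c ∈ Finset.range (2 * m), ∑ b ∈ Finset.range c,
        (triangleWave m (b + c) - triangleWave m c) *
          (triangleWave m b - triangleWave m (b + c + 1))
      = (m : ℤ) ^ 4 - m - 2 * m *
        ∑ x ∈ Finset.range (2 * m), triangleWave m x * triangleWave m (x + 1) := by
  set h := triangleWave m with hh
  set P := ∑ x ∈ Finset.range (2 * m), h x * h (x + 1) with hP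
  have hper : ∀ x, h (x + 2 * m) = h x := triangleWave_periodic hm
  let F : ℕ → ℕ → ℤ := fun b c => h (b + c) * h (b + c + 1) - h (b + c) * (h b + h c) + h b * h c
  have hF : ∀ b c, F b c = F c b := fun b c => by simp only [F, add_comm c b]; ring
  have hterm : ∀ c b, (h (b + c) - h c) * (h b - h (b + c + 1))
      = h c * squareWave m (c + b) - F b c := fun c b => by
    simp only [F, hh, add_comm c b, triangleWave_succ]; ring
  have hinner : ∀ c, ∑ b ∈ Finset.range c, squareWave m (c + b) = h (2 * c) - h c := fun c => by
    rw [two_mul, hh, triangleWave, triangleWave, Finset.sum_range_add]; ring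
  have hfull : ∑ c ∈ Finset.range (2 * m), ∑ b ∈ Finset.range (2 * m), F b c
      = 2 * m * P - (m : ℤ) ^ 4 := by
    have h₁ : ∑ c ∈ Finset.range (2 * m), ∑ b ∈ Finset.range (2 * m),
        h (c + b) * h (c + b + 1) = 2 * m * P := by
      rw [Finset.sum_congr rfl fun c _ => sum_range_add_of_periodic
        (F := fun x => h x * h (x + 1)) (fun x => by
          rw [show x + 2 * m + 1 = x + 1 + 2 * m by ring, hper, hper]) c]
      simp [hP]
    have h₂ : ∑ c ∈ Finset.range (2 * m), ∑ b ∈ Finset.range (2 * m), h (c + b) * h c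
        = (m : ℤ) ^ 4 := by
      simp only [← Finset.sum_mul, sum_range_add_of_periodic hper]
      rw [← Finset.mul_sum, hh, sum_triangleWave hm]; ring
    have h₃ : ∑ c ∈ Finset.range (2 * m), ∑ b ∈ Finset.range (2 * m), h (c + b) * h b
        = (m : ℤ) ^ 4 := by
      rw [Finset.sum_comm, ← h₂]; simp only [add_comm]
    have h₄ : ∑ c ∈ Finset.range (2 * m), ∑ b ∈ Finset.range (2 * m), h b * h c
        = (m : ℤ) ^ 4 := by
      simp only [← Finset.sum_mul]
      rw [← Finset.mul_sum, hh, sum_triangleWave hm]; ring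
    simp only [F, mul_add, Finset.sum_add_distrib, Finset.sum_sub_distrib]
    simp only [add_comm _ (_ : ℕ)] at h₁ h₂ h₃ ⊢
    linarith
  have hsymm := sum_square_of_symm hF (2 * m)
  have hdiag : ∑ c ∈ Finset.range (2 * m), F c c
      = P - 2 * ∑ c ∈ Finset.range (2 * m), h c * h (2 * c) + (P + m) := by
    rw [← sum_triangleWave_sq hm, hP, ← sum_triangleWave_two_mul hm, Finset.mul_sum,
      ← Finset.sum_sub_distrib, ← Finset.sum_add_distrib]
    exact Finset.sum_congr rfl fun c _ => by simp only [F, ← two_mul, hh]; ring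
  have hlin : ∑ c ∈ Finset.range (2 * m), h c * (h (2 * c) - h c)
      = ∑ c ∈ Finset.range (2 * m), h c * h (2 * c) - (P + m) := by
    rw [← sum_triangleWave_sq hm, ← Finset.sum_sub_distrib]
    exact Finset.sum_congr rfl fun c _ => by ring
  simp only [hterm, Finset.sum_sub_distrib, ← Finset.mul_sum, hinner]
  rw [hlin]
  linarith

/-- The effect of deleting vertex `0` from the quadruples counted in
`two_mul_sum_triangleWave_even`. -/
lemma sum_triangleWave_odd (k : ℕ) :
    ∑ c ∈ Finset.range (2 * k + 1), ∑ b ∈ Finset.range c,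
        (triangleWave (k + 1) (b + c + 2) - triangleWave (k + 1) (c + 2)) *
          (triangleWave (k + 1) (b + 1) - triangleWave (k + 1) (b + c + 3))
      = ∑ c ∈ Finset.range (2 * (k + 1)), ∑ b ∈ Finset.range c,
        (triangleWave (k + 1) (b + c) - triangleWave (k + 1) c) *
          (triangleWave (k + 1) b - triangleWave (k + 1) (b + c + 1))
        + 2 * ∑ x ∈ Finset.range (2 * (k + 1)),
          triangleWave (k + 1) x * triangleWave (k + 1) (x + 1)
        - ((k : ℤ) + 1) ^ 3 + 1 := by
  set m := k + 1 with hmk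
  have hm : 0 < m := Nat.succ_pos k
  set h := triangleWave m with hh
  set s := squareWave m with hs
  set P := ∑ x ∈ Finset.range (2 * m), h x * h (x + 1) with hP
  have hper : ∀ x, h (x + 2 * m) = h x := triangleWave_periodic hm
  have hsucc : ∀ x, h (x + 1) = h x + s x := triangleWave_succ m
  let X : ℕ → ℤ := fun x => ∑ y ∈ Finset.range x, h y
  have hX : ∀ x, X (x + 1) = X x + h x := fun x => Finset.sum_range_succ _ _
  have hXper : ∀ x, X (x + 2 * m) = X x + (m : ℤ) ^ 2 := fun x => by
    simp only [X, Finset.sum_range_add, sum_range_add_of_periodic hper]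
    rw [hh, sum_triangleWave hm]
  have hsX : ∑ c ∈ Finset.range (2 * m), s c * X c = -P := by
    have ht := Finset.sum_range_sub (fun x => h x * X x) (2 * m)
    rw [Finset.sum_congr rfl (g := fun x => s x * X x + h x * h (x + 1))
      fun x _ => by rw [hX, hsucc]; ring, Finset.sum_add_distrib, hh, triangleWave_period hm,
      triangleWave_zero] at ht
    linarith
  have hsXodd : ∑ c ∈ Finset.range (2 * m), s c * X (2 * c + 1) = -(m : ℤ) ^ 3 := by
    rw [sum_range_double, ← Finset.sum_add_distrib,
      Finset.sum_congr rfl (g := fun _ => -(m : ℤ) ^ 2)]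
    · simp; ring
    · intro c hc
      rw [show 2 * (c + m) + 1 = 2 * c + 1 + 2 * m by ring, hXper, hs, squareWave_add_half hm,
        squareWave_of_lt (Finset.mem_range.mp hc)]
      ring
  have hsY : ∑ c ∈ Finset.range (2 * m), s c * ∑ b ∈ Finset.range c, (h b - h (b + c + 1))
      = -2 * P - m + (m : ℤ) ^ 3 := by
    have hY : ∀ c, s c * ∑ b ∈ Finset.range c, (h b - h (b + c + 1))
        = 2 * (s c * X c) - s c * X (2 * c + 1) + s c * h c := fun c => by
      have h₁ : X (2 * c + 1) = X (c + 1) + ∑ b ∈ Finset.range c, h (b + c + 1) := by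
        simp only [X]
        rw [show 2 * c + 1 = c + 1 + c by ring, Finset.sum_range_add]
        congr 1
        exact Finset.sum_congr rfl fun b _ => by congr 1; ring
      rw [Finset.sum_sub_distrib, h₁, hX]
      simp only [X]
      ring
    rw [Finset.sum_congr rfl fun c _ => hY c, Finset.sum_add_distrib, Finset.sum_sub_distrib,
      ← Finset.mul_sum, hsX, hsXodd, hs, hh, sum_squareWave_mul_triangleWave hm]
    ring
  have hsh : ∑ c ∈ Finset.range (2 * m), s c * h (c + 1) = m := by
    simp only [hsucc, mul_add, Finset.sum_add_distrib]
    rw [hs, hh, sum_squareWave_mul_triangleWave hm]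
    simp only [squareWave_mul_self]
    simp; ring
  have hfirst : ∑ c ∈ Finset.range (2 * k + 1), s (c + 1) * h (c + 2) = m - 1 := by
    rw [show 2 * m = 2 * k + 1 + 1 by omega, Finset.sum_range_succ'] at hsh
    rw [hs, squareWave_of_lt hm, hh, triangleWave_of_le hm] at hsh
    push_cast at hsh
    linarith
  have hshift : ∑ c ∈ Finset.range (2 * m), ∑ b ∈ Finset.range c,
        (h (b + c) - h (c + 1)) * (h b - h (b + c + 1))
      = ∑ c ∈ Finset.range (2 * k + 1), ∑ b ∈ Finset.range c,
        (h (b + c + 2) - h (c + 2)) * (h (b + 1) - h (b + c + 3)) + (m - 1) := by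
    rw [← hfirst, ← Finset.sum_add_distrib, show 2 * m = 2 * k + 1 + 1 by omega,
      Finset.sum_range_succ']
    simp only [Finset.range_zero, Finset.sum_empty, add_zero]
    refine Finset.sum_congr rfl fun c _ => ?_
    rw [Finset.sum_range_succ']
    congr 1
    · refine Finset.sum_congr rfl fun b _ => ?_
      rw [show b + 1 + (c + 1) = b + c + 2 by ring]
    · rw [zero_add, hsucc (c + 1), hh, triangleWave_zero]; ring
  have hsplit : ∑ c ∈ Finset.range (2 * m), ∑ b ∈ Finset.range c,
        (h (b + c) - h (c + 1)) * (h b - h (b + c + 1))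
      = ∑ c ∈ Finset.range (2 * m), ∑ b ∈ Finset.range c,
        (h (b + c) - h c) * (h b - h (b + c + 1))
        - ∑ c ∈ Finset.range (2 * m), s c * ∑ b ∈ Finset.range c, (h b - h (b + c + 1)) := by
    simp only [Finset.mul_sum, ← Finset.sum_sub_distrib]
    refine Finset.sum_congr rfl fun c _ => Finset.sum_congr rfl fun b _ => ?_
    rw [hsucc c]; ring
  have hmc : (m : ℤ) = k + 1 := by rw [hmk]; push_cast; ring
  rw [← hmc]
  linarith

lemma sum_range_pairs (N : ℤ) (k : ℕ) :
    24 * ∑ c ∈ Finset.range k, ∑ b ∈ Finset.range c, (b : ℤ) * (N - 1 - c)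
      = 4 * (N - 3) * (k * (k - 1) * (k - 2)) - 3 * (k * (k - 1) * (k - 2) * (k - 3)) := by
  induction k with
  | zero => simp
  | succ k ih =>
    rw [Finset.sum_range_succ, mul_add, ih, ← Finset.sum_mul]
    have := sum_range_id_int k
    push_cast
    linear_combination 12 * (N - 1 - k) * this

end SquareWave

section TwoPage

lemma eq_and_interleaved_of_parabolas_meet {a b c d σ τ t : ℝ} (hσ : σ = 1 ∨ σ = -1)
    (hτ : τ = 1 ∨ τ = -1) (hne : ¬ (a = c ∧ b = d)) (h₁ : max a c < t) (h₂ : t < min b d)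
    (h : σ * ((t - a) * (b - t)) = τ * ((t - c) * (d - t))) :
    σ = τ ∧ (a < c ∧ c < b ∧ b < d ∨ c < a ∧ a < d ∧ d < b) ∧
      (t - a) * (b - t) = (t - c) * (d - t) := by
  rw [max_lt_iff] at h₁
  rw [lt_min_iff] at h₂
  obtain ⟨hat, hct⟩ := h₁
  obtain ⟨htb, htd⟩ := h₂
  have hp : 0 < (t - a) * (b - t) := mul_pos (by linarith) (by linarith)
  have hq : 0 < (t - c) * (d - t) := mul_pos (by linarith) (by linarith)
  have hστ : σ = τ := by
    rcases hσ with rfl | rfl <;> rcases hτ with rfl | rfl <;> first | rfl | (exfalso; linarith)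
  have heq : (t - a) * (b - t) = (t - c) * (d - t) := by
    subst hστ
    rcases hσ with rfl | rfl <;> linarith
  refine ⟨hστ, ?_, heq⟩
  rcases lt_trichotomy a c with hac | hac | hac
  · refine Or.inl ⟨hac, by linarith, ?_⟩
    by_contra hbd
    nlinarith [mul_pos (sub_pos.mpr hac) (sub_pos.mpr htb)]
  · subst hac
    have := mul_left_cancel₀ (by linarith : t - a ≠ 0) heq
    exact absurd ⟨rfl, by linarith⟩ hne
  · refine Or.inr ⟨hac, by linarith, ?_⟩
    by_contra hbd
    nlinarith [mul_pos (sub_pos.mpr hac) (sub_pos.mpr htd)]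

lemma sum_ne_of_interleaved {a b c d : ℝ}
    (h : a < c ∧ c < b ∧ b < d ∨ c < a ∧ a < d ∧ d < b) : a + b ≠ c + d := by
  rcases h with ⟨h₁, -, h₂⟩ | ⟨h₁, -, h₂⟩
  · linarith
  · linarith

lemma parabolas_meet_unique {a b c d σ τ t u : ℝ} (hσ : σ = 1 ∨ σ = -1)
    (hτ : τ = 1 ∨ τ = -1) (hne : ¬ (a = c ∧ b = d)) (h₁ : max a c < t) (h₂ : t < min b d)
    (h : σ * ((t - a) * (b - t)) = τ * ((t - c) * (d - t))) (h₁' : max a c < u)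
    (h₂' : u < min b d) (h' : σ * ((u - a) * (b - u)) = τ * ((u - c) * (d - u))) : t = u := by
  obtain ⟨-, hlin, heq⟩ := eq_and_interleaved_of_parabolas_meet hσ hτ hne h₁ h₂ h
  obtain ⟨-, -, heq'⟩ := eq_and_interleaved_of_parabolas_meet hσ hτ hne h₁' h₂' h'
  refine mul_left_cancel₀ (sub_ne_zero.mpr (sum_ne_of_interleaved hlin)) ?_
  linear_combination heq - heq'

lemma exists_parabolas_meet {a b c d : ℝ} (hac : a < c) (hcb : c < b) (hbd : b < d) :
    ∃ t, c < t ∧ t < b ∧ (t - a) * (b - t) = (t - c) * (d - t) := by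
  have hpos : 0 < c + d - a - b := by linarith
  refine ⟨(c * d - a * b) / (c + d - a - b), ?_, ?_, ?_⟩
  · rw [lt_div_iff₀ hpos]; nlinarith [mul_pos (sub_pos.mpr hac) (sub_pos.mpr hcb)]
  · rw [div_lt_iff₀ hpos]; nlinarith [mul_pos (sub_pos.mpr hcb) (sub_pos.mpr hbd)]
  · have h : (c * d - a * b) / (c + d - a - b) * (c + d - a - b) = c * d - a * b :=
      div_mul_cancel₀ _ hpos.ne'
    linear_combination -h

variable {n : ℕ}

/-- The two-page drawing of `K n` with vertices `0, …, n - 1` on the `x`-axis, in which the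
edge `{i, j}` is a parabolic arc on the side of the axis given by the sign `σ i j`. -/
noncomputable def twoPageDrawing (σ : Fin n → Fin n → ℝ)
    (hσ : ∀ i j, σ i j = 1 ∨ σ i j = -1) : XMonotoneDrawing n where
  x i := (i : ℕ)
  x_strictMono i j h := by simpa using h
  e i j t := σ i j * ((t - (i : ℕ)) * ((j : ℕ) - t))
  cont i j _ := by fun_prop
  end_left i j _ := by simp
  end_right i j _ := by simp
  avoid_vertex i m j him hmj := by
    have h₁ : ((i : ℕ) : ℝ) < (m : ℕ) := by exact_mod_cast him
    have h₂ : ((m : ℕ) : ℝ) < (j : ℕ) := by exact_mod_cast hmj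
    have h₃ : σ i j ≠ 0 := by rcases hσ i j with h | h <;> simp [h]
    exact mul_ne_zero h₃ (mul_ne_zero (by linarith) (by linarith))
  cross_finite i j k l hij hkl hne := by
    refine Set.Subsingleton.finite fun t ⟨h₁, h₂, h⟩ u ⟨h₁', h₂', h'⟩ => ?_
    have hne' : ¬ (((i : ℕ) : ℝ) = (k : ℕ) ∧ ((j : ℕ) : ℝ) = (l : ℕ)) := by
      simpa [Fin.val_inj] using hne
    exact parabolas_meet_unique (hσ i j) (hσ k l) hne' h₁ h₂ h h₁' h₂' h'
  sign_change i j k l _ _ hne t h₁ h₂ h := by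
    have hne' : ¬ (((i : ℕ) : ℝ) = (k : ℕ) ∧ ((j : ℕ) : ℝ) = (l : ℕ)) := by
      simpa [Fin.val_inj] using hne
    obtain ⟨hs, hlin, heq⟩ := eq_and_interleaved_of_parabolas_meet (hσ i j) (hσ k l) hne' h₁ h₂ h
    refine ⟨1, one_pos, fun s _ _ hst u _ htu _ => ?_⟩
    have hslope := sum_ne_of_interleaved hlin
    have hsq : σ k l ^ 2 = 1 := by rcases hσ k l with h | h <;> simp [h]
    have key : ∀ r : ℝ, σ i j * ((r - (i : ℕ)) * ((j : ℕ) - r))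
        - σ k l * ((r - (k : ℕ)) * ((l : ℕ) - r))
        = σ k l * ((((i : ℕ) : ℝ) + (j : ℕ) - ((k : ℕ) + (l : ℕ))) * (r - t)) := fun r => by
      rw [hs]; linear_combination σ k l * heq
    rw [key, key]
    have hpos := mul_pos (mul_pos (sub_pos.mpr hst) (sub_pos.mpr htu))
      (pow_pos (abs_pos.mpr (sub_ne_zero.mpr hslope)) 2)
    rw [sq_abs] at hpos
    linear_combination hpos
      + (s - t) * (u - t) * (((i : ℕ) : ℝ) + (j : ℕ) - ((k : ℕ) + (l : ℕ))) ^ 2 * hsq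

lemma crossCount_twoPageDrawing (σ : Fin n → Fin n → ℝ) (hσ : ∀ i j, σ i j = 1 ∨ σ i j = -1)
    {i j k l : Fin n} (hne : (i, j) ≠ (k, l)) :
    (twoPageDrawing σ hσ).crossCount i j k l
      = (if i < k ∧ k < j ∧ j < l ∧ σ i j = σ k l then 1 else 0)
        + if k < i ∧ i < l ∧ l < j ∧ σ k l = σ i j then 1 else 0 := by
  have hne' : ¬ (((i : ℕ) : ℝ) = (k : ℕ) ∧ ((j : ℕ) : ℝ) = (l : ℕ)) := by
    simpa [Fin.val_inj] using hne
  unfold XMonotoneDrawing.crossCount XMonotoneDrawing.crossSet twoPageDrawing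
  dsimp only
  set S := {t : ℝ | max ((i : ℕ) : ℝ) ((k : ℕ) : ℝ) < t ∧ t < min ((j : ℕ) : ℝ) ((l : ℕ) : ℝ) ∧
    σ i j * ((t - (i : ℕ)) * ((j : ℕ) - t)) = σ k l * ((t - (k : ℕ)) * ((l : ℕ) - t))} with hS
  have hsub : S.Subsingleton := fun t ⟨h₁, h₂, h⟩ u ⟨h₁', h₂', h'⟩ =>
    parabolas_meet_unique (hσ i j) (hσ k l) hne' h₁ h₂ h h₁' h₂' h'
  have hcard : ∀ t ∈ S, S.ncard = 1 := fun t ht =>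
    Set.ncard_eq_one.mpr ⟨t, hsub.eq_singleton_of_mem ht⟩
  by_cases h₁ : i < k ∧ k < j ∧ j < l ∧ σ i j = σ k l
  · rw [if_pos h₁, if_neg fun h => absurd h.1 h₁.1.not_gt]
    obtain ⟨hik, hkj, hjl, hs⟩ := h₁
    obtain ⟨t, hct, htb, h⟩ := exists_parabolas_meet (Nat.cast_lt (α := ℝ).mpr hik)
      (Nat.cast_lt.mpr hkj) (Nat.cast_lt.mpr hjl)
    refine hcard t ⟨max_lt ((Nat.cast_lt.mpr hik).trans hct) hct,
      lt_min htb (htb.trans (Nat.cast_lt.mpr hjl)), by rw [hs, h]⟩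
  by_cases h₂ : k < i ∧ i < l ∧ l < j ∧ σ k l = σ i j
  · rw [if_neg h₁, if_pos h₂]
    obtain ⟨hki, hil, hlj, hs⟩ := h₂
    obtain ⟨t, hct, htb, h⟩ := exists_parabolas_meet (Nat.cast_lt (α := ℝ).mpr hki)
      (Nat.cast_lt.mpr hil) (Nat.cast_lt.mpr hlj)
    exact hcard t ⟨max_lt hct ((Nat.cast_lt.mpr hki).trans hct),
      lt_min (htb.trans (Nat.cast_lt.mpr hlj)) htb, by rw [hs, h]⟩
  · rw [if_neg h₁, if_neg h₂]
    have : S = ∅ := by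
      refine Set.eq_empty_of_forall_notMem fun t ⟨ht₁, ht₂, ht⟩ => ?_
      obtain ⟨hs, hlin, -⟩ :=
        eq_and_interleaved_of_parabolas_meet (hσ i j) (hσ k l) hne' ht₁ ht₂ ht
      simp only [Nat.cast_lt, Fin.val_fin_lt] at hlin
      rcases hlin with ⟨h, h', h''⟩ | ⟨h, h', h''⟩
      · exact h₁ ⟨h, h', h'', hs⟩
      · exact h₂ ⟨h, h', h'', hs.symm⟩
    simp [this]

lemma simple_twoPageDrawing (σ : Fin n → Fin n → ℝ) (hσ : ∀ i j, σ i j = 1 ∨ σ i j = -1) :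
    (twoPageDrawing σ hσ).Simple := by
  intro i j k l hij hkl hne
  rw [crossCount_twoPageDrawing σ hσ hne]
  refine ⟨fun hadj => ?_, fun _ => ?_⟩
  · unfold XMonotoneDrawing.Adj at hadj
    rw [if_neg (by omega), if_neg (by omega)]
  · split_ifs <;> omega

lemma cr_twoPageDrawing (σ : Fin n → Fin n → ℝ) (hσ : ∀ i j, σ i j = 1 ∨ σ i j = -1) :
    (twoPageDrawing σ hσ).cr = ∑ c : Fin n, ∑ b : Fin n, ∑ a : Fin n, ∑ d : Fin n,
      if a < b ∧ b < c ∧ c < d ∧ σ a c = σ b d then 1 else 0 := by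
  have hterm : ∀ p : (Fin n × Fin n) × (Fin n × Fin n),
      (if p.1.1 < p.1.2 ∧ p.2.1 < p.2.2 ∧ p.1 ≠ p.2 then
        (twoPageDrawing σ hσ).crossCount p.1.1 p.1.2 p.2.1 p.2.2 else 0)
      = (if p.1.1 < p.2.1 ∧ p.2.1 < p.1.2 ∧ p.1.2 < p.2.2 ∧
          σ p.1.1 p.1.2 = σ p.2.1 p.2.2 then 1 else 0)
        + if p.2.1 < p.1.1 ∧ p.1.1 < p.2.2 ∧ p.2.2 < p.1.2 ∧
          σ p.2.1 p.2.2 = σ p.1.1 p.1.2 then 1 else 0 := by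
    rintro ⟨⟨i, j⟩, ⟨k, l⟩⟩
    dsimp only
    by_cases h : i < j ∧ k < l ∧ (i, j) ≠ (k, l)
    · rw [if_pos h, crossCount_twoPageDrawing σ hσ h.2.2]
    · simp only [ne_eq, Prod.mk.injEq] at h
      rw [if_neg (by simpa using h), if_neg (by omega), if_neg (by omega)]
  have hswap : (∑ p : (Fin n × Fin n) × (Fin n × Fin n),
        if p.2.1 < p.1.1 ∧ p.1.1 < p.2.2 ∧ p.2.2 < p.1.2 ∧
          σ p.2.1 p.2.2 = σ p.1.1 p.1.2 then 1 else 0)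
      = ∑ p : (Fin n × Fin n) × (Fin n × Fin n),
        if p.1.1 < p.2.1 ∧ p.2.1 < p.1.2 ∧ p.1.2 < p.2.2 ∧
          σ p.1.1 p.1.2 = σ p.2.1 p.2.2 then 1 else 0 :=
    (Equiv.prodComm _ _).sum_comp fun p : (Fin n × Fin n) × (Fin n × Fin n) =>
      if p.1.1 < p.2.1 ∧ p.2.1 < p.1.2 ∧ p.1.2 < p.2.2 ∧
        σ p.1.1 p.1.2 = σ p.2.1 p.2.2 then 1 else 0
  unfold XMonotoneDrawing.cr
  rw [Finset.sum_congr rfl fun p _ => hterm p, Finset.sum_add_distrib, hswap, ← two_mul,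
    Nat.mul_div_cancel_left _ two_pos]
  simp only [Fintype.sum_prod_type]
  rw [Finset.sum_comm]
  refine Finset.sum_congr rfl fun c _ => ?_
  rw [Finset.sum_comm]

end TwoPage

section Counting

lemma sum_range_ite_lt {M : Type*} [AddCommMonoid M] {n k : ℕ} (hk : k ≤ n) (g : ℕ → M) :
    ∑ i ∈ Finset.range n, (if i < k then g i else 0) = ∑ i ∈ Finset.range k, g i := by
  rw [← Finset.sum_filter]
  refine Finset.sum_congr (Finset.ext fun i => ?_) fun _ _ => rfl
  simp only [Finset.mem_filter, Finset.mem_range]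
  omega

lemma sum_range_ite_gt {M : Type*} [AddCommMonoid M] (n k : ℕ) (g : ℕ → M) :
    ∑ i ∈ Finset.range n, (if k < i then g i else 0) = ∑ i ∈ Finset.Ico (k + 1) n, g i := by
  rw [← Finset.sum_filter]
  refine Finset.sum_congr (Finset.ext fun i => ?_) fun _ _ => rfl
  simp only [Finset.mem_filter, Finset.mem_range, Finset.mem_Ico]
  omega

/-- The number of crossings of the two-page drawing in which the side of the edge `{i, j}`
is the sign `f (i + j)`. -/
lemma two_mul_cr_twoPageDrawing (n : ℕ) (f : ℕ → ℤ) (hf : ∀ u, f u = 1 ∨ f u = -1)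
    (hσ : ∀ i j : Fin n, ((f (i + j) : ℤ) : ℝ) = 1 ∨ ((f (i + j) : ℤ) : ℝ) = -1) :
    2 * ((twoPageDrawing (fun i j : Fin n => ((f (i + j) : ℤ) : ℝ)) hσ).cr : ℤ)
      = ∑ c ∈ Finset.range n, ∑ b ∈ Finset.range c, (b : ℤ) * (n - 1 - c)
        + ∑ c ∈ Finset.range n, ∑ b ∈ Finset.range c,
          (∑ a ∈ Finset.range b, f (a + c)) * ∑ d ∈ Finset.Ico (c + 1) n, f (b + d) := by
  have hterm : ∀ a b c d : ℕ, (2 : ℤ) * (if a < b ∧ b < c ∧ c < d ∧ f (a + c) = f (b + d)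
      then 1 else 0) = if b < c then (if a < b then (if c < d then
        1 + f (a + c) * f (b + d) else 0) else 0) else 0 := by
    intro a b c d
    by_cases h₁ : b < c <;> by_cases h₂ : a < b <;> by_cases h₃ : c < d <;> simp [h₁, h₂, h₃]
    rcases hf (a + c) with h | h <;> rcases hf (b + d) with h' | h' <;> simp [h, h']
  rw [cr_twoPageDrawing]
  simp only [Int.cast_inj, Fin.lt_def]
  push_cast
  rw [Fin.sum_univ_eq_sum_range (fun c => ∑ b : Fin n, ∑ a : Fin n, ∑ d : Fin n,
    if (a : ℕ) < b ∧ (b : ℕ) < c ∧ c < d ∧ f (a + c) = f (b + d) then (1 : ℤ) else 0),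
    ← Finset.sum_add_distrib, Finset.mul_sum]
  refine Finset.sum_congr rfl fun c hc => ?_
  rw [Finset.mem_range] at hc
  rw [Fin.sum_univ_eq_sum_range (fun b => ∑ a : Fin n, ∑ d : Fin n,
    if (a : ℕ) < b ∧ b < c ∧ c < d ∧ f (a + c) = f (b + d) then (1 : ℤ) else 0),
    ← Finset.sum_add_distrib, ← sum_range_ite_lt hc.le, Finset.mul_sum]
  refine Finset.sum_congr rfl fun b _ => ?_
  rw [Fin.sum_univ_eq_sum_range (fun a => ∑ d : Fin n,
    if a < b ∧ b < c ∧ c < d ∧ f (a + c) = f (b + d) then (1 : ℤ) else 0)]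
  rw [Finset.sum_congr rfl fun a _ => Fin.sum_univ_eq_sum_range (fun d =>
    if a < b ∧ b < c ∧ c < d ∧ f (a + c) = f (b + d) then (1 : ℤ) else 0) n]
  simp only [Finset.mul_sum, hterm]
  split_ifs with hbc
  · simp only [sum_range_ite_gt, Finset.sum_ite_irrel, Finset.sum_const_zero]
    rw [sum_range_ite_lt (hbc.trans hc).le]
    simp only [Finset.sum_add_distrib, ← Finset.mul_sum, ← Finset.sum_mul, Finset.sum_const,
      Nat.card_Ico, Finset.card_range, nsmul_eq_mul]
    rw [show ((n - (c + 1) : ℕ) : ℤ) = n - 1 - c by omega]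
    ring
  · simp

end Counting

lemma sum_range_squareWave_add (m b c : ℕ) :
    ∑ a ∈ Finset.range b, squareWave m (a + c) = triangleWave m (b + c) - triangleWave m c := by
  rw [add_comm b c, triangleWave, triangleWave, Finset.sum_range_add, add_sub_cancel_left]
  simp only [add_comm]

lemma sum_Ico_squareWave_add (m b : ℕ) {p q : ℕ} (h : p ≤ q) :
    ∑ d ∈ Finset.Ico p q, squareWave m (b + d)
      = triangleWave m (b + q) - triangleWave m (b + p) := by
  simp only [add_comm b]
  rw [Finset.sum_Ico_eq_sub _ h, sum_range_squareWave_add, sum_range_squareWave_add]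
  ring

lemma eq_Zval_of_four_mul_eq {n r : ℕ}
    (h : 4 * r = n / 2 * ((n - 1) / 2) * ((n - 2) / 2) * ((n - 3) / 2)) : r = Zval n := by
  rw [Zval, ← h, Nat.mul_div_cancel_left _ four_pos]

/-- For every `n ≥ 1` there exists a simple x-monotone drawing of `K n`
with exactly `Z(n)` crossings. -/
theorem exists_simple_monotone_drawing_cr_eq_Z (n : ℕ) (hn : 1 ≤ n) :
    ∃ D : XMonotoneDrawing n, D.Simple ∧ D.cr = Zval n := by
  rcases Nat.even_or_odd' n with ⟨m, rfl | rfl⟩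
  · have hm : 0 < m := by omega
    have hσ : ∀ i j : Fin (2 * m), ((squareWave m (i + j) : ℤ) : ℝ) = 1 ∨
        ((squareWave m (i + j) : ℤ) : ℝ) = -1 := fun i j => by
      exact_mod_cast squareWave_eq_one_or m (i + j)
    refine ⟨twoPageDrawing _ hσ, simple_twoPageDrawing _ hσ, ?_⟩
    have hcr := two_mul_cr_twoPageDrawing (2 * m) (squareWave m) (squareWave_eq_one_or m) hσ
    have hsum : ∑ c ∈ Finset.range (2 * m), ∑ b ∈ Finset.range c,
        (∑ a ∈ Finset.range b, squareWave m (a + c)) *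
          ∑ d ∈ Finset.Ico (c + 1) (2 * m), squareWave m (b + d)
        = ∑ c ∈ Finset.range (2 * m), ∑ b ∈ Finset.range c,
          (triangleWave m (b + c) - triangleWave m c) *
            (triangleWave m b - triangleWave m (b + c + 1)) := by
      refine Finset.sum_congr rfl fun c hc => Finset.sum_congr rfl fun b _ => ?_
      rw [Finset.mem_range] at hc
      rw [sum_range_squareWave_add, sum_Ico_squareWave_add _ _ hc, triangleWave_periodic hm]
      rfl
    have hpairs := sum_range_pairs ((2 * m : ℕ) : ℤ) (2 * m)
    have hwave := two_mul_sum_triangleWave_even hm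
    have hP := sum_triangleWave_mul_succ hm
    rw [hsum] at hcr
    push_cast at hcr hpairs
    have key : 12 * (4 * ((twoPageDrawing _ hσ).cr : ℤ))
        = 12 * (m * (m - 1) * (m - 1) * (m - 2)) := by
      linear_combination 24 * hcr + hpairs + 12 * hwave - 8 * m * hP
    refine eq_Zval_of_four_mul_eq ?_
    rw [show 2 * m / 2 = m by omega, show (2 * m - 1) / 2 = m - 1 by omega,
      show (2 * m - 2) / 2 = m - 1 by omega, show (2 * m - 3) / 2 = m - 2 by omega]
    obtain rfl | h2 : m = 1 ∨ 2 ≤ m := by omega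
    · norm_num at key ⊢
      exact key
    · zify [hm, h2]
      exact mul_left_cancel₀ (by norm_num) key
  · have hσ : ∀ i j : Fin (2 * m + 1), ((squareWave (m + 1) (i + j + 2) : ℤ) : ℝ) = 1 ∨
        ((squareWave (m + 1) (i + j + 2) : ℤ) : ℝ) = -1 := fun i j => by
      exact_mod_cast squareWave_eq_one_or (m + 1) (i + j + 2)
    refine ⟨twoPageDrawing _ hσ, simple_twoPageDrawing _ hσ, ?_⟩
    have hcr := two_mul_cr_twoPageDrawing (2 * m + 1) (fun u => squareWave (m + 1) (u + 2))
      (fun u => squareWave_eq_one_or (m + 1) (u + 2)) hσ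
    have hsum : ∑ c ∈ Finset.range (2 * m + 1), ∑ b ∈ Finset.range c,
        (∑ a ∈ Finset.range b, squareWave (m + 1) (a + c + 2)) *
          ∑ d ∈ Finset.Ico (c + 1) (2 * m + 1), squareWave (m + 1) (b + d + 2)
        = ∑ c ∈ Finset.range (2 * m + 1), ∑ b ∈ Finset.range c,
          (triangleWave (m + 1) (b + c + 2) - triangleWave (m + 1) (c + 2)) *
            (triangleWave (m + 1) (b + 1) - triangleWave (m + 1) (b + c + 3)) := by
      refine Finset.sum_congr rfl fun c hc => Finset.sum_congr rfl fun b _ => ?_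
      rw [Finset.mem_range] at hc
      simp only [add_assoc _ c 2, add_right_comm b _ 2]
      rw [sum_range_squareWave_add, sum_Ico_squareWave_add _ _ hc,
        show b + 2 + (2 * m + 1) = b + 1 + 2 * (m + 1) by ring,
        triangleWave_periodic m.succ_pos, show b + 2 + (c + 1) = b + c + 3 by ring]
    have hpairs := sum_range_pairs ((2 * m + 1 : ℕ) : ℤ) (2 * m + 1)
    have hwave := two_mul_sum_triangleWave_even m.succ_pos
    have hP := sum_triangleWave_mul_succ m.succ_pos
    have hodd := sum_triangleWave_odd m
    simp only [hsum] at hcr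
    push_cast at hcr hpairs hwave hP
    have key : 12 * (4 * ((twoPageDrawing _ hσ).cr : ℤ))
        = 12 * (m * m * (m - 1) * (m - 1)) := by
      linear_combination 24 * hcr + hpairs + 12 * hwave + 24 * hodd - 8 * (m - 1) * hP
    refine eq_Zval_of_four_mul_eq ?_
    rw [show (2 * m + 1) / 2 = m by omega, show (2 * m + 1 - 1) / 2 = m by omega,
      show (2 * m + 1 - 2) / 2 = m - 1 by omega, show (2 * m + 1 - 3) / 2 = m - 1 by omega]
    obtain rfl | h1 : m = 0 ∨ 1 ≤ m := by omega
    · norm_num at key ⊢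
      exact key
    · zify [h1]
      exact mul_left_cancel₀ (by norm_num) key
end
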